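/- arXiv:2103.08027 — 2 statements merged into one kernel-verified Lean document; each statement's English description precedes it below -/
import Mathlib

section
/- Extended generalized Faulhaber formula for the partial sums of ζ(3/2): Let x ∈ ℝ with x > 0. Then the series ∑_{k=1}^{∞} (−1)^{k+1} (∑_{l=1}^{k} ((−1)^l (2l+1)!!/(2^{l+1} (l+1)!)) S_k^{(1)}(l) B_{l+1}({x})) / (x(x+1)(x+2)⋯(x+k)) converges absolutely, and ∑_{k=1}^{⌊x⌋} k^{−3/2} = ζ(3/2) − 2/√x − B_1({x})/(x√x) + (2/√x) ∑_{k=1}^{∞} (−1)^{k+1} (∑_{l=1}^{k} ((−1)^l (2l+1)!!/(2^{l+1} (l+1)!)) S_k^{(1)}(l) B_{l+1}({x})) / (x(x+1)(x+2)⋯(x+k)). -/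
open Finset in
/-- Unsigned Stirling numbers of the first kind, via the rising-factorial recurrence:
`z(z+1)⋯(z+k−1) = ∑ l, stirling1Unsigned k l * z^l`. -/
def stirling1Unsigned : ℕ → ℕ → ℕ
  | 0, 0 => 1
  | 0, _ + 1 => 0
  | k + 1, 0 => k * stirling1Unsigned k 0
  | k + 1, l + 1 => stirling1Unsigned k l + k * stirling1Unsigned k (l + 1)

/-- The Stirling numbers of the first kind `S_k^{(1)}(l)` of the paper, defined by
`z(z+1)⋯(z+k−1) = (−1)^k ∑_{l=0}^k (−1)^l S_k^{(1)}(l) z^l`, i.e.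
`S_k^{(1)}(l) = (−1)^{k−l}` times the coefficient of `z^l` in the rising factorial. -/
def S1 (k l : ℕ) : ℤ := (-1) ^ (k + l) * stirling1Unsigned k l

/-- The `n`-th Bernoulli polynomial `B_n(x) = ∑_{k=0}^n C(n,k) B_k x^{n−k}`,
with `B_1 = −1/2`. -/
noncomputable def bernPoly (n : ℕ) (x : ℝ) : ℝ :=
  ∑ k ∈ Finset.range (n + 1), (n.choose k : ℝ) * (bernoulli k : ℝ) * x ^ (n - k)

/-- The generalized binomial coefficient `C(w,k) = w(w−1)⋯(w−k+1)/k!`. -/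
noncomputable def cchoose (w : ℂ) (k : ℕ) : ℂ :=
  (∏ i ∈ Finset.range k, (w - i)) / (k.factorial : ℂ)

/-- The rising product `(z+1)(z+2)⋯(z+k)`. -/
noncomputable def risingProd (z : ℂ) (k : ℕ) : ℂ :=
  ∏ i ∈ Finset.range k, (z + i + 1)

/-- The rising product `(x+1)(x+2)⋯(x+k)` over the reals. -/
noncomputable def risingProdR (x : ℝ) (k : ℕ) : ℝ :=
  ∏ i ∈ Finset.range k, (x + i + 1)

/-- The digamma function `ψ(z) = Γ′(z)/Γ(z)`. -/
noncomputable def digamma (z : ℂ) : ℂ := deriv Complex.Gamma z / Complex.Gamma z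

/-!
Put `F t = t * exp (a * t) / (exp t - 1)`, so that `F⁽ˡ⁾(0) = B_l(a)`, and let `0 < s ≤ 1`.
Expanding `F` as a geometric series gives
`x * ∫₀^∞ exp (-x * t) * F (s * t) dt = ∑ m, x * s / (x + (1 - a + m) * s) ^ 2`.
Integration by parts turns the left side into one plus the Laplace transform of `s * F' (s * t)`.
As a function of `u = 1 - exp (-t)`, this is analytic on the unit disc with Taylor coefficients
`∑ l ≤ k, c(k, l) * s ^ (l + 1) * B_{l+1}(a) / k!`, and
`∫₀^∞ exp (-x * t) * u ^ k dt = k! / (x * (x + 1) * ⋯ * (x + k))` produces the inverse factorial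
series. Its terms are summable uniformly in `s` because the derivative of that analytic function is
`O(1 / |1 - u|)`, so that Cauchy's formula on circles of radius `1 - 1 / (k + 2)` bounds the `k`-th
derivative by `(k - 1)! * k ^ ε` for every `ε > 0`.

Finally average over `s = (1 + v ^ 2)⁻¹` with `v` standard Cauchy. The mean of `s ^ (l + 1)` is
`(2 * l + 1)!! / (2 ^ (l + 1) * (l + 1)!)`, and the inverse squares average to multiples of
`(x + 1 - a + m) ^ (-3 / 2)`; at `a = {x}` these are the terms of `ζ(3/2)` beyond `⌊x⌋`.
-/

namespace ExtendedFaulhaber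

section BernoulliGenerating

open Complex

/-- The exponential generating function `t ↦ t * exp (a * t) / (exp t - 1)` of the Bernoulli
polynomials at `a`. Writing the denominator as the divided slope of `exp` removes the singularity
at `t = 0`. -/
noncomputable def bernoulliGen (a t : ℂ) : ℂ := exp (a * t) / dslope exp 0 t

lemma mul_dslope_exp_zero (t : ℂ) : t * dslope exp 0 t = exp t - 1 := by
  simpa using sub_smul_dslope exp 0 t

lemma dslope_exp_zero_ne_zero {t : ℂ} (ht : |t.im| < 2 * Real.pi) : dslope exp 0 t ≠ 0 := by
  intro h
  have hexp : exp t = 1 := by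
    rw [← sub_eq_zero, ← mul_dslope_exp_zero, h, mul_zero]
  obtain ⟨n, rfl⟩ := exp_eq_one_iff.1 hexp
  have hn : n = 0 := by
    have him : |(n : ℝ)| * (2 * Real.pi) < 1 * (2 * Real.pi) := by
      simpa [abs_mul, abs_of_pos Real.pi_pos] using ht
    have := lt_of_mul_lt_mul_right him Real.two_pi_pos.le
    exact Int.abs_lt_one_iff.1 (by exact_mod_cast this)
  simp [hn, dslope_same] at h

lemma bernoulliGen_zero (a : ℂ) : bernoulliGen a 0 = 1 := by
  simp [bernoulliGen, dslope_same]

lemma bernoulliGen_mul_exp_sub_one (a : ℂ) {t : ℂ} (ht : |t.im| < 2 * Real.pi) :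
    bernoulliGen a t * (exp t - 1) = t * exp (a * t) := by
  rw [← mul_dslope_exp_zero, bernoulliGen]
  field_simp [dslope_exp_zero_ne_zero ht]

lemma analyticAt_bernoulliGen (a : ℂ) {t : ℂ} (ht : |t.im| < 2 * Real.pi) :
    AnalyticAt ℂ (bernoulliGen a) t := by
  have hslope : Differentiable ℂ (dslope exp 0) := by
    rw [← differentiableOn_univ]
    exact (differentiableOn_dslope Filter.univ_mem).2 differentiable_exp.differentiableOn
  exact AnalyticAt.div (by fun_prop) (hslope.analyticAt t) (dslope_exp_zero_ne_zero ht)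

lemma sum_choose_mul_iteratedDeriv_bernoulliGen (a : ℂ) (n : ℕ) :
    ∑ k ∈ Finset.range (n + 1), ((n + 1).choose k : ℂ) * iteratedDeriv k (bernoulliGen a) 0
      = (n + 1) * a ^ n := by
  have hstrip : ∀ᶠ t : ℂ in nhds 0, |t.im| < 2 * Real.pi :=
    (continuous_abs.comp continuous_im).continuousAt.eventually_lt continuousAt_const
      (by simp [Real.pi_pos])
  have hprod : (fun t => bernoulliGen a t * (exp t - 1)) =ᶠ[nhds 0] fun t => t * exp (a * t) :=
    hstrip.mono fun t ht => bernoulliGen_mul_exp_sub_one a ht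
  have hexp (m : ℕ) : iteratedDeriv (m + 1) (fun t : ℂ => exp t - 1) 0 = 1 := by
    have hderiv : deriv (fun t : ℂ => exp t - 1) = exp := by ext t; simp
    rw [iteratedDeriv_succ', hderiv, iteratedDeriv_eq_iterate, iter_deriv_exp, exp_zero]
  have hid (m : ℕ) (hm : m ≠ 1) : iteratedDeriv m (fun t : ℂ => t) 0 = 0 := by
    rcases m with _ | _ | m
    · simp
    · contradiction
    · simp [iteratedDeriv_succ']
  have hright : iteratedDeriv (n + 1) (fun t => t * exp (a * t)) 0 = (n + 1) * a ^ n := by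
    rw [iteratedDeriv_fun_mul (by fun_prop) (by fun_prop),
      Finset.sum_eq_single_of_mem 1 (by simp) fun m _ hm => by rw [hid m hm]; ring]
    simp [iteratedDeriv_one, iteratedDeriv_cexp_const_mul]
  rw [← hright, ← hprod.iteratedDeriv_eq, iteratedDeriv_fun_mul
    (analyticAt_bernoulliGen a hstrip.self_of_nhds).contDiffAt (by fun_prop),
    Finset.sum_range_succ _ (n + 1)]
  simp only [Nat.sub_self, iteratedDeriv_zero, exp_zero, sub_self, mul_zero, add_zero]
  refine Finset.sum_congr rfl fun k hk => ?_
  rw [Nat.succ_sub (Finset.mem_range_succ_iff.1 hk), hexp, mul_one]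

lemma sum_choose_mul_aeval_bernoulli (a : ℂ) (n : ℕ) :
    ∑ k ∈ Finset.range (n + 1), ((n + 1).choose k : ℂ) * (Polynomial.bernoulli k).aeval a
      = (n + 1) * a ^ n := by
  simpa [Algebra.smul_def, Polynomial.aeval_monomial, add_mul] using
    congrArg (Polynomial.aeval a) (Polynomial.sum_bernoulli n)

lemma iteratedDeriv_bernoulliGen_zero (a : ℂ) (n : ℕ) :
    iteratedDeriv n (bernoulliGen a) 0 = (Polynomial.bernoulli n).aeval a := by
  induction n using Nat.strong_induction_on with
  | _ n ih =>
    have h := (sum_choose_mul_iteratedDeriv_bernoulliGen a n).trans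
      (sum_choose_mul_aeval_bernoulli a n).symm
    rw [Finset.sum_range_succ, Finset.sum_range_succ,
      Finset.sum_congr rfl fun k hk => by rw [ih k (Finset.mem_range.1 hk)]] at h
    have hchoose : ((n + 1).choose n : ℂ) ≠ 0 := by
      exact_mod_cast (Nat.choose_pos n.le_succ).ne'
    exact mul_left_cancel₀ hchoose (add_left_cancel h)

lemma norm_bernoulliGen_le (a : ℝ) {t : ℂ} (ht : 1 ≤ t.re) (him : |t.im| < 2 * Real.pi) :
    ‖bernoulliGen a t‖ ≤ 2 * ‖t‖ * Real.exp (-((1 - a) * t.re)) := by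
  have hmul := congrArg norm (bernoulliGen_mul_exp_sub_one a him)
  have hre : ((a : ℂ) * t).re = a * t.re := by simp
  rw [norm_mul, norm_mul, norm_exp, hre] at hmul
  have hexp : Real.exp t.re / 2 ≤ ‖exp t - 1‖ := by
    have := norm_sub_norm_le (exp t) 1
    rw [norm_exp, norm_one] at this
    linarith [Real.add_one_le_exp t.re]
  have hsplit : Real.exp (a * t.re) = Real.exp (-((1 - a) * t.re)) * Real.exp t.re := by
    rw [← Real.exp_add]; ring_nf
  refine le_of_mul_le_mul_right ?_ (half_pos (Real.exp_pos t.re))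
  calc ‖bernoulliGen a t‖ * (Real.exp t.re / 2)
      ≤ ‖bernoulliGen a t‖ * ‖exp t - 1‖ := by gcongr
    _ = 2 * ‖t‖ * Real.exp (-((1 - a) * t.re)) * (Real.exp t.re / 2) := by
        rw [hmul, hsplit]; ring

lemma exists_norm_bernoulliGen_le {a : ℝ} (ha : a < 1) (R : ℝ) {h : ℝ} (hh : h < 2 * Real.pi) :
    ∃ M, ∀ t : ℂ, -R ≤ t.re → |t.im| ≤ h → ‖bernoulliGen a t‖ ≤ M := by
  have hcont : ContinuousOn (bernoulliGen a) (Set.Icc (-R) 1 ×ℂ Set.Icc (-h) h) := fun t ht =>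
    (analyticAt_bernoulliGen a
      ((abs_le.2 ht.2).trans_lt hh)).continuousAt.continuousWithinAt
  obtain ⟨M₀, hM₀⟩ :=
    (isCompact_Icc.reProdIm isCompact_Icc).exists_bound_of_continuousOn hcont
  refine ⟨max M₀ (2 * ((1 - a)⁻¹ + h)), fun t hre him => ?_⟩
  rcases le_total t.re 1 with ht | ht
  · exact le_max_of_le_left (hM₀ t ⟨⟨hre, ht⟩, abs_le.1 him⟩)
  have hb : 0 < 1 - a := sub_pos.2 ha
  have hdecay : t.re * Real.exp (-((1 - a) * t.re)) ≤ (1 - a)⁻¹ := by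
    rw [Real.exp_neg, ← div_eq_mul_inv, div_le_iff₀ (Real.exp_pos _), inv_mul_eq_div,
      le_div_iff₀ hb]
    linarith [Real.add_one_le_exp ((1 - a) * t.re)]
  have hexp : Real.exp (-((1 - a) * t.re)) ≤ 1 :=
    Real.exp_le_one_iff.2 (by nlinarith)
  have hnorm : ‖t‖ ≤ t.re + h := by
    have := norm_le_abs_re_add_abs_im t
    rw [abs_of_pos (one_pos.trans_le ht)] at this
    linarith
  have hh₀ : 0 ≤ h := (abs_nonneg _).trans him
  calc ‖bernoulliGen a t‖ ≤ 2 * ‖t‖ * Real.exp (-((1 - a) * t.re)) :=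
        norm_bernoulliGen_le a ht (him.trans_lt hh)
    _ ≤ 2 * (t.re + h) * Real.exp (-((1 - a) * t.re)) := by gcongr
    _ = 2 * (t.re * Real.exp (-((1 - a) * t.re)) + h * Real.exp (-((1 - a) * t.re))) := by ring
    _ ≤ 2 * ((1 - a)⁻¹ + h * 1) := by gcongr
    _ ≤ max M₀ (2 * ((1 - a)⁻¹ + h)) := by rw [mul_one]; exact le_max_right _ _

lemma exists_norm_iteratedDeriv_bernoulliGen_le {a : ℝ} (ha : a < 1) (n : ℕ) (R : ℝ) {h : ℝ}
    (hh : h < 2 * Real.pi) :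
    ∃ M, ∀ t : ℂ, -R ≤ t.re → |t.im| ≤ h → ‖iteratedDeriv n (bernoulliGen a) t‖ ≤ M := by
  obtain ⟨r, hr, hrh⟩ : ∃ r > 0, h + r < 2 * Real.pi :=
    ⟨(2 * Real.pi - h) / 2, by linarith, by linarith⟩
  obtain ⟨M, hM⟩ := exists_norm_bernoulliGen_le ha (R + r) hrh
  refine ⟨n.factorial * M / r ^ n, fun t hre him => ?_⟩
  have hball : ∀ z ∈ Metric.closedBall t r, -(R + r) ≤ z.re ∧ |z.im| ≤ h + r := by
    intro z hz
    have hz : ‖z - t‖ ≤ r := by simpa [dist_eq_norm] using hz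
    have hzre := abs_le.1 ((abs_re_le_norm (z - t)).trans hz)
    have hzim := (abs_im_le_norm (z - t)).trans hz
    rw [sub_re] at hzre
    rw [sub_im] at hzim
    exact ⟨by linarith, by linarith [abs_sub_abs_le_abs_sub z.im t.im]⟩
  refine norm_iteratedDeriv_le_of_forall_mem_sphere_norm_le n hr
    (DifferentiableOn.diffContOnCl fun z hz => ?_) fun z hz => ?_
  · have hz := hball z (Metric.closure_ball_subset_closedBall hz)
    exact (analyticAt_bernoulliGen a
      (hz.2.trans_lt hrh)).differentiableAt.differentiableWithinAt
  · have hz := hball z (Metric.sphere_subset_closedBall hz)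
    exact hM z hz.1 hz.2

end BernoulliGenerating

section LogComposition

open Complex Metric

lemma stirlingFirst_succ_sum_mul {R : Type*} [CommSemiring R] (k : ℕ) (y : ℕ → R) :
    ∑ l ∈ Finset.range (k + 2), (Nat.stirlingFirst (k + 1) l : R) * y l =
      ∑ l ∈ Finset.range (k + 1), (Nat.stirlingFirst k l : R) * (k * y l + y (l + 1)) := by
  have hshift : ∑ l ∈ Finset.range (k + 1), (Nat.stirlingFirst k l : R) * (k * y l) =
      k * Nat.stirlingFirst k 0 * y 0 +
        ∑ l ∈ Finset.range (k + 1), k * (Nat.stirlingFirst k (l + 1) : R) * y (l + 1) := by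
    rw [Finset.sum_range_succ', Finset.sum_range_succ,
      Nat.stirlingFirst_eq_zero_of_lt k.lt_succ_self]
    simp only [Nat.cast_zero, mul_zero, zero_mul, add_zero]
    rw [add_comm]
    congr 1
    · ring
    · exact Finset.sum_congr rfl fun l _ => by ring
  have hzero : (Nat.stirlingFirst (k + 1) 0 : R) = k * Nat.stirlingFirst k 0 := by
    cases k <;> simp
  simp only [mul_add, Finset.sum_add_distrib]
  rw [hshift, Finset.sum_range_succ', hzero, add_comm, add_assoc, ← Finset.sum_add_distrib]
  congr 1
  refine Finset.sum_congr rfl fun l _ => ?_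
  rw [Nat.stirlingFirst_succ_succ]
  push_cast
  ring

lemma one_sub_mem_slitPlane {u : ℂ} (hu : u ∈ ball (0 : ℂ) 1) : 1 - u ∈ slitPlane := by
  simpa [← sub_eq_add_neg] using mem_slitPlane_of_norm_lt_one (z := -u) (by simpa using hu)

lemma hasDerivAt_comp_neg_mul_log {f : ℂ → ℂ} {f' s u : ℂ} (hu : u ∈ ball (0 : ℂ) 1)
    (hf : HasDerivAt f f' (-s * log (1 - u))) :
    HasDerivAt (fun v => f (-s * log (1 - v))) (s / (1 - u) * f') u := by
  have hlog := (((hasDerivAt_id' u).const_sub 1).clog (one_sub_mem_slitPlane hu)).const_mul (-s)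
  exact (hf.comp u hlog).congr_deriv (by ring)

lemma iteratedDeriv_comp_neg_mul_log {f : ℂ → ℂ} {s : ℂ}
    (hf : ∀ u ∈ ball (0 : ℂ) 1, AnalyticAt ℂ f (-s * log (1 - u))) (k : ℕ) {u : ℂ}
    (hu : u ∈ ball (0 : ℂ) 1) :
    iteratedDeriv k (fun v => f (-s * log (1 - v))) u = ((1 - u) ^ k)⁻¹ *
      ∑ l ∈ Finset.range (k + 1),
        (Nat.stirlingFirst k l : ℂ) * (s ^ l * iteratedDeriv l f (-s * log (1 - u))) := by
  induction k generalizing u with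
  | zero => simp
  | succ k ih =>
    have hne : 1 - u ≠ 0 := slitPlane_ne_zero (one_sub_mem_slitPlane hu)
    have hev := Filter.EventuallyEq.deriv_eq ((isOpen_ball.eventually_mem hu).mono fun v => ih)
    have hpow := (((hasDerivAt_id' u).const_sub 1).fun_pow k).fun_inv (pow_ne_zero k hne)
    have hderiv (l : ℕ) : HasDerivAt (iteratedDeriv l f)
        (iteratedDeriv (l + 1) f (-s * log (1 - u))) (-s * log (1 - u)) := by
      rw [iteratedDeriv_succ, iteratedDeriv_eq_iterate]
      exact ((hf u hu).iterated_deriv l).differentiableAt.hasDerivAt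
    have hsum := HasDerivAt.fun_sum (u := Finset.range (k + 1)) fun l _ =>
      ((hasDerivAt_comp_neg_mul_log hu (hderiv l)).const_mul (s ^ l)).const_mul
        (Nat.stirlingFirst k l : ℂ)
    rw [iteratedDeriv_succ, hev, (hpow.fun_mul hsum).deriv, stirlingFirst_succ_sum_mul,
      Finset.mul_sum, Finset.mul_sum, Finset.mul_sum, ← Finset.sum_add_distrib]
    refine Finset.sum_congr rfl fun l _ => ?_
    rcases k with _ | k
    · simp only [Nat.cast_zero, zero_mul, neg_zero, zero_div, zero_add]
      field_simp
      ring
    · simp only [Nat.add_sub_cancel]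
      field_simp
      ring

lemma neg_mul_log_one_sub_mem_halfStrip {s : ℝ} (hs : s ∈ Set.Icc (0 : ℝ) 1) {u : ℂ}
    (hu : u ∈ ball (0 : ℂ) 1) :
    -1 ≤ (-s * log (1 - u)).re ∧ |(-s * log (1 - u)).im| ≤ Real.pi := by
  have hre : (-s * log (1 - u)).re = -(s * Real.log ‖1 - u‖) := by simp [log_re]
  have him : (-s * log (1 - u)).im = -(s * arg (1 - u)) := by simp [log_im]
  rw [hre, him, abs_neg, abs_mul, abs_of_nonneg hs.1]
  constructor
  · have hnorm : ‖1 - u‖ ≤ 2 := by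
      have := norm_sub_le 1 u
      rw [norm_one] at this
      linarith [mem_ball_zero_iff.1 hu]
    have hlog := Real.log_le_sub_one_of_pos
      (norm_pos_iff.2 (slitPlane_ne_zero (one_sub_mem_slitPlane hu)))
    nlinarith [hs.1, hs.2]
  · exact (mul_le_of_le_one_left (abs_nonneg _) hs.2).trans (abs_arg_le_pi _)

/-- The function `u ↦ s * F' (-s * log (1 - u))`, where `F` is the Bernoulli generating function.
At `u = 1 - exp (-t)` it equals the `t`-derivative of `F (s * t)`. -/
noncomputable def bernoulliLog (a s : ℝ) (u : ℂ) : ℂ :=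
  s * deriv (bernoulliGen a) (-s * log (1 - u))

/-- The coefficient `∑ l ≤ k, c(k, l) * m (l + 1) * B_{l+1}(a)`, where `c(k, l)` is the unsigned
Stirling number of the first kind. The weights `m` are a sequence of powers `s ^ n` or, after
averaging over `s`, a sequence of moments. -/
noncomputable def stirlingBernoulliSum (a : ℝ) (m : ℕ → ℝ) (k : ℕ) : ℝ :=
  ∑ l ∈ Finset.range (k + 1),
    (Nat.stirlingFirst k l : ℝ) * (m (l + 1) * (Polynomial.bernoulli (l + 1)).aeval a)

variable {s : ℝ}

lemma analyticAt_bernoulliGen_neg_mul_log (a : ℝ) (hs : s ∈ Set.Icc (0 : ℝ) 1) {u : ℂ}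
    (hu : u ∈ ball (0 : ℂ) 1) : AnalyticAt ℂ (bernoulliGen a) (-s * log (1 - u)) :=
  analyticAt_bernoulliGen a
    ((neg_mul_log_one_sub_mem_halfStrip hs hu).2.trans_lt (by linarith [Real.pi_pos]))

lemma iteratedDeriv_bernoulliLog_zero (a : ℝ) (hs : s ∈ Set.Icc (0 : ℝ) 1) (k : ℕ) :
    iteratedDeriv k (bernoulliLog a s) 0 = stirlingBernoulliSum a (s ^ ·) k := by
  have haeval (n : ℕ) : (((Polynomial.bernoulli n).aeval a : ℝ) : ℂ) =
      (Polynomial.bernoulli n).aeval (a : ℂ) := by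
    simpa using (Polynomial.aeval_algebraMap_apply ℂ a (Polynomial.bernoulli n)).symm
  unfold bernoulliLog
  rw [iteratedDeriv_const_mul_field, iteratedDeriv_comp_neg_mul_log
    (fun u hu => (analyticAt_bernoulliGen_neg_mul_log a hs hu).deriv) k (mem_ball_self one_pos)]
  simp only [sub_zero, log_one, mul_zero, one_pow, inv_one, one_mul, ← iteratedDeriv_succ',
    iteratedDeriv_bernoulliGen_zero, stirlingBernoulliSum, Finset.mul_sum]
  push_cast
  refine Finset.sum_congr rfl fun l _ => ?_
  rw [haeval]
  ring

lemma hasDerivAt_bernoulliLog (a : ℝ) (hs : s ∈ Set.Icc (0 : ℝ) 1) {u : ℂ}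
    (hu : u ∈ ball (0 : ℂ) 1) :
    HasDerivAt (bernoulliLog a s)
      (s * (s / (1 - u) * iteratedDeriv 2 (bernoulliGen a) (-s * log (1 - u)))) u := by
  refine (hasDerivAt_comp_neg_mul_log hu ?_).const_mul (s : ℂ)
  rw [iteratedDeriv_succ, iteratedDeriv_one]
  exact (analyticAt_bernoulliGen_neg_mul_log a hs hu).deriv.differentiableAt.hasDerivAt

lemma differentiableOn_bernoulliLog (a : ℝ) (hs : s ∈ Set.Icc (0 : ℝ) 1) :
    DifferentiableOn ℂ (bernoulliLog a s) (ball 0 1) :=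
  fun _ hu => (hasDerivAt_bernoulliLog a hs hu).differentiableAt.differentiableWithinAt

lemma exists_norm_bernoulliLog_le {a : ℝ} (ha : a < 1) :
    ∃ C, ∀ s ∈ Set.Icc (0 : ℝ) 1, ∀ u ∈ ball (0 : ℂ) 1,
      ‖bernoulliLog a s u‖ ≤ C ∧ ‖deriv (bernoulliLog a s) u‖ ≤ C / ‖1 - u‖ := by
  have hπ : Real.pi < 2 * Real.pi := by linarith [Real.pi_pos]
  obtain ⟨M₁, hM₁⟩ := exists_norm_iteratedDeriv_bernoulliGen_le ha 1 1 hπ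
  obtain ⟨M₂, hM₂⟩ := exists_norm_iteratedDeriv_bernoulliGen_le ha 2 1 hπ
  refine ⟨max M₁ M₂, fun s hs u hu => ?_⟩
  obtain ⟨hre, him⟩ := neg_mul_log_one_sub_mem_halfStrip hs hu
  have h₁ := (hM₁ _ hre him).trans (le_max_left M₁ M₂)
  have h₂ := (hM₂ _ hre him).trans (le_max_right M₁ M₂)
  have hs₀ := hs.1
  have hs₁ := hs.2
  constructor
  · rw [bernoulliLog, ← iteratedDeriv_one, norm_mul, norm_real, Real.norm_of_nonneg hs₀]
    exact (mul_le_of_le_one_left (norm_nonneg _) hs₁).trans h₁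
  · rw [(hasDerivAt_bernoulliLog a hs hu).deriv, norm_mul, norm_mul, norm_div, norm_real,
      Real.norm_of_nonneg hs₀]
    calc s * (s / ‖1 - u‖ * ‖iteratedDeriv 2 (bernoulliGen a) (-s * log (1 - u))‖)
        ≤ 1 * (1 / ‖1 - u‖ * max M₁ M₂) := by gcongr
      _ = max M₁ M₂ / ‖1 - u‖ := by ring

end LogComposition

section CoefficientBound

open Real MeasureTheory Metric

lemma sin_half_le_norm_one_sub_circleMap {r θ : ℝ} (hr : 0 ≤ r) (hθ : θ ∈ Set.Icc 0 (2 * π)) :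
    sin (θ / 2) ≤ ‖1 - circleMap 0 r θ‖ := by
  have hrot : ‖1 - circleMap 0 r θ‖ = ‖Complex.exp (-((θ / 2 : ℝ) : ℂ) * Complex.I) -
      r * Complex.exp (((θ / 2 : ℝ) : ℂ) * Complex.I)‖ := by
    have hunit : ‖Complex.exp (((-(θ / 2) : ℝ) : ℂ) * Complex.I)‖ = 1 :=
      Complex.norm_exp_ofReal_mul_I _
    rw [← one_mul ‖1 - _‖, ← hunit, ← norm_mul, circleMap_zero, mul_sub, mul_one, mul_left_comm,
      ← Complex.exp_add]
    push_cast
    ring_nf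
  have him : (Complex.exp (-((θ / 2 : ℝ) : ℂ) * Complex.I) -
      r * Complex.exp (((θ / 2 : ℝ) : ℂ) * Complex.I)).im = -((1 + r) * sin (θ / 2)) := by
    rw [← Complex.ofReal_neg, Complex.sub_im, Complex.im_ofReal_mul, Complex.exp_ofReal_mul_I_im,
      Complex.exp_ofReal_mul_I_im, sin_neg]
    ring
  have hsin : 0 ≤ sin (θ / 2) := sin_nonneg_of_nonneg_of_le_pi (by linarith [hθ.1])
    (by linarith [hθ.2])
  rw [hrot]
  refine le_trans ?_ (Complex.abs_im_le_norm _)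
  rw [him, abs_neg, abs_of_nonneg (by positivity)]
  nlinarith

lemma min_div_pi_le_sin_half {θ : ℝ} (hθ : θ ∈ Set.Icc 0 (2 * π)) :
    min θ (2 * π - θ) / π ≤ sin (θ / 2) := by
  obtain ⟨h₀, h₁⟩ := hθ
  rcases le_total θ π with h | h
  · calc min θ (2 * π - θ) / π ≤ θ / π := by gcongr; exact min_le_left _ _
      _ = 2 / π * (θ / 2) := by ring
      _ ≤ sin (θ / 2) := mul_le_sin (by linarith) (by linarith)
  · calc min θ (2 * π - θ) / π ≤ (2 * π - θ) / π := by gcongr; exact min_le_right _ _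
      _ = 2 / π * (π - θ / 2) := by ring
      _ ≤ sin (π - θ / 2) := mul_le_sin (by linarith) (by linarith)
      _ = sin (θ / 2) := sin_pi_sub _

/-- An integrable majorant, up to the factor `(1 - r) ^ (-ε)`, of `θ ↦ ‖1 - r * exp (I * θ)‖⁻¹`
on `(0, 2π)`. -/
noncomputable def circleWeight (ε θ : ℝ) : ℝ :=
  π ^ (1 - ε) * (θ ^ (ε - 1) + (2 * π - θ) ^ (ε - 1))

lemma intervalIntegrable_circleWeight {ε : ℝ} (hε : 0 < ε) :
    IntervalIntegrable (circleWeight ε) volume 0 (2 * π) := by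
  have hleft : IntervalIntegrable (fun θ : ℝ => θ ^ (ε - 1)) volume 0 (2 * π) :=
    intervalIntegral.intervalIntegrable_rpow' (by linarith)
  have hright := hleft.comp_sub_left (2 * π)
  rw [sub_zero, sub_self] at hright
  exact (hleft.add hright.symm).const_mul _

lemma inv_norm_one_sub_circleMap_le {ε r θ : ℝ} (hε : ε ∈ Set.Icc 0 1) (hr : r ∈ Set.Ico 0 1)
    (hθ : θ ∈ Set.Ioo 0 (2 * π)) :
    ‖1 - circleMap 0 r θ‖⁻¹ ≤ (1 - r) ^ (-ε) * circleWeight ε θ := by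
  obtain ⟨hθ₀, hθ₁⟩ := hθ
  have hθ₂ : 0 < 2 * π - θ := sub_pos.2 hθ₁
  have hmin : 0 < min θ (2 * π - θ) := lt_min hθ₀ hθ₂
  set d := ‖1 - circleMap 0 r θ‖
  have hradial : 1 - r ≤ d := by
    simpa [abs_of_nonneg hr.1] using norm_sub_norm_le (1 : ℂ) (circleMap 0 r θ)
  have hangular : min θ (2 * π - θ) / π ≤ d :=
    (min_div_pi_le_sin_half ⟨hθ₀.le, hθ₁.le⟩).trans
      (sin_half_le_norm_one_sub_circleMap hr.1 ⟨hθ₀.le, hθ₁.le⟩)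
  have hr₁ : 0 < 1 - r := sub_pos.2 hr.2
  have hd : 0 < d := hr₁.trans_le hradial
  have hweight : (min θ (2 * π - θ) / π) ^ (ε - 1) ≤ circleWeight ε θ := by
    rw [circleWeight, div_rpow hmin.le pi_pos.le, div_eq_mul_inv, ← rpow_neg pi_pos.le, neg_sub,
      mul_comm]
    gcongr
    rcases min_choice θ (2 * π - θ) with h | h <;> rw [h]
    · exact le_add_of_nonneg_right (rpow_nonneg hθ₂.le _)
    · exact le_add_of_nonneg_left (rpow_nonneg hθ₀.le _)
  calc d⁻¹ = d ^ (-ε) * d ^ (ε - 1) := by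
        rw [← rpow_add hd, ← rpow_neg_one]; ring_nf
    _ ≤ (1 - r) ^ (-ε) * (min θ (2 * π - θ) / π) ^ (ε - 1) :=
        mul_le_mul (rpow_le_rpow_of_nonpos hr₁ hradial (neg_nonpos.2 hε.1))
          (rpow_le_rpow_of_nonpos (div_pos hmin pi_pos) hangular (sub_nonpos.2 hε.2))
          (by positivity) (by positivity)
    _ ≤ (1 - r) ^ (-ε) * circleWeight ε θ := by gcongr

lemma norm_iteratedDeriv_le_integral_circle {E : Type*} [NormedAddCommGroup E] [NormedSpace ℂ E]
    [CompleteSpace E] {h : ℂ → E} {c : ℂ} {r : ℝ} (hr : 0 < r) (hh : DiffContOnCl ℂ h (ball c r))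
    (k : ℕ) :
    ‖iteratedDeriv k h c‖ ≤
      k.factorial / (2 * π) * (r ^ k)⁻¹ * ∫ θ in (0 : ℝ)..2 * π, ‖h (circleMap c r θ)‖ := by
  have hcauchy := congrArg norm (hh.circleIntegral_one_div_sub_center_pow_smul hr k)
  have hbound := intervalIntegral.norm_integral_le_integral_norm (μ := volume) two_pi_pos.le
    (f := fun θ => deriv (circleMap c r) θ •
      (1 / (circleMap c r θ - c) ^ (k + 1)) • h (circleMap c r θ))
  have hintegrand (θ : ℝ) : ‖deriv (circleMap c r) θ •
      (1 / (circleMap c r θ - c) ^ (k + 1)) • h (circleMap c r θ)‖ =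
        (r ^ k)⁻¹ * ‖h (circleMap c r θ)‖ := by
    rw [circleMap_sub_center, deriv_circleMap, norm_smul, norm_smul, norm_mul, norm_div, norm_pow,
      Complex.norm_I, norm_circleMap_zero, abs_of_pos hr, norm_one]
    field_simp
    ring
  simp only [hintegrand, intervalIntegral.integral_const_mul] at hbound
  rw [circleIntegral] at hcauchy
  rw [hcauchy, norm_smul, norm_div, norm_mul, Complex.norm_I, Complex.norm_natCast, norm_mul,
    Complex.norm_real, norm_of_nonneg pi_pos.le, Complex.norm_ofNat, mul_one] at hbound
  rw [mul_assoc, ← div_le_iff₀' (by positivity)]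
  exact (le_of_eq (by field_simp)).trans hbound

lemma inv_one_sub_inv_pow_le_exp_one (k : ℕ) :
    ((1 - ((k : ℝ) + 2)⁻¹) ^ k)⁻¹ ≤ exp 1 := by
  have hinv : (1 - ((k : ℝ) + 2)⁻¹)⁻¹ = ((k : ℝ) + 1)⁻¹ + 1 := by
    have : (1 - ((k : ℝ) + 2)⁻¹) = (k + 1) / (k + 2) := by field_simp; ring
    rw [this]; field_simp; ring
  rw [← inv_pow, hinv]
  calc (((k : ℝ) + 1)⁻¹ + 1) ^ k ≤ exp ((k : ℝ) + 1)⁻¹ ^ k := by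
        gcongr; exact add_one_le_exp _
    _ = exp (k * ((k : ℝ) + 1)⁻¹) := (exp_nat_mul _ _).symm
    _ ≤ exp 1 := by
        rw [exp_le_exp, ← div_eq_mul_inv, div_le_one (by positivity)]
        linarith

lemma integral_norm_comp_circleMap_le {E : Type*} [NormedAddCommGroup E] {ε r C : ℝ}
    (hε : ε ∈ Set.Ioc 0 1) (hr : r ∈ Set.Ico 0 1) {h : ℂ → E} (hh : ContinuousOn h (ball 0 1))
    (hC : ∀ u ∈ ball (0 : ℂ) 1, ‖h u‖ ≤ C / ‖1 - u‖) :
    ∫ θ in (0 : ℝ)..2 * π, ‖h (circleMap 0 r θ)‖ ≤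
      C * (1 - r) ^ (-ε) * ∫ θ in (0 : ℝ)..2 * π, circleWeight ε θ := by
  have hC₀ : 0 ≤ C := by simpa using (norm_nonneg _).trans (hC 0 (by simp))
  have hcircle (θ : ℝ) : circleMap 0 r θ ∈ ball (0 : ℂ) 1 := by
    simpa [abs_of_nonneg hr.1] using hr.2
  rw [← intervalIntegral.integral_const_mul]
  refine intervalIntegral.integral_mono_on_of_le_Ioo two_pi_pos.le ?_
    ((intervalIntegrable_circleWeight hε.1).const_mul _) fun θ hθ => ?_
  · exact (hh.comp_continuous (continuous_circleMap 0 r) hcircle).norm.intervalIntegrable _ _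
  · calc ‖h (circleMap 0 r θ)‖ ≤ C * ‖1 - circleMap 0 r θ‖⁻¹ := hC _ (hcircle θ)
      _ ≤ C * ((1 - r) ^ (-ε) * circleWeight ε θ) := by
          gcongr
          exact inv_norm_one_sub_circleMap_le ⟨hε.1.le, hε.2⟩ hr hθ
      _ = C * (1 - r) ^ (-ε) * circleWeight ε θ := by ring

lemma exists_norm_iteratedDeriv_le_mul_rpow {ε : ℝ} (hε : ε ∈ Set.Ioc 0 1) :
    ∃ K, ∀ (C : ℝ) (h : ℂ → ℂ), DifferentiableOn ℂ h (ball 0 1) →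
      (∀ u ∈ ball (0 : ℂ) 1, ‖h u‖ ≤ C / ‖1 - u‖) →
      ∀ k : ℕ, ‖iteratedDeriv k h 0‖ ≤ k.factorial * (C * K * ((k : ℝ) + 2) ^ ε) := by
  refine ⟨exp 1 / (2 * π) * ∫ θ in (0 : ℝ)..2 * π, circleWeight ε θ, fun C h hh hC k => ?_⟩
  set r : ℝ := 1 - ((k : ℝ) + 2)⁻¹ with hr_def
  have hr : r ∈ Set.Ioo (0 : ℝ) 1 :=
    ⟨sub_pos.2 (inv_lt_one_of_one_lt₀ (by linarith [k.cast_nonneg (α := ℝ)])),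
      sub_lt_self 1 (by positivity)⟩
  have hpow : (1 - r) ^ (-ε) = ((k : ℝ) + 2) ^ ε := by
    rw [hr_def, sub_sub_cancel, inv_rpow (by positivity), rpow_neg (by positivity), inv_inv]
  have hint := integral_norm_comp_circleMap_le hε ⟨hr.1.le, hr.2⟩ hh.continuousOn hC
  have hcl : DiffContOnCl ℂ h (ball 0 r) := (hh.mono
    (closure_ball_subset_closedBall.trans (closedBall_subset_ball hr.2))).diffContOnCl
  calc ‖iteratedDeriv k h 0‖
      ≤ k.factorial / (2 * π) * (r ^ k)⁻¹ * ∫ θ in (0 : ℝ)..2 * π, ‖h (circleMap 0 r θ)‖ :=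
        norm_iteratedDeriv_le_integral_circle hr.1 hcl k
    _ ≤ k.factorial / (2 * π) * exp 1 *
          (C * (1 - r) ^ (-ε) * ∫ θ in (0 : ℝ)..2 * π, circleWeight ε θ) := by
        gcongr
        · exact intervalIntegral.integral_nonneg two_pi_pos.le fun _ _ => norm_nonneg _
        · exact inv_one_sub_inv_pow_le_exp_one k
    _ = _ := by rw [hpow]; ring

end CoefficientBound

section FactorialSeries

open Real MeasureTheory Metric Set

variable {x : ℝ}

lemma ascPochhammer_succ_eval_left {S : Type*} [CommSemiring S] (x : S) (k : ℕ) :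
    (ascPochhammer S (k + 1)).eval x = x * (ascPochhammer S k).eval (x + 1) := by
  simp [ascPochhammer_succ_left]

lemma ascPochhammer_eval_eq_prod_range {S : Type*} [CommSemiring S] (x : S) (n : ℕ) :
    (ascPochhammer S n).eval x = ∏ j ∈ Finset.range n, (x + j) := by
  induction n with
  | zero => simp
  | succ n ih => rw [ascPochhammer_succ_eval, ih, Finset.prod_range_succ]

lemma exp_neg_mul_mul_one_sub_exp_neg_pow_succ (x t : ℝ) (k : ℕ) :
    exp (-(x * t)) * (1 - exp (-t)) ^ (k + 1) = exp (-(x * t)) * (1 - exp (-t)) ^ k -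
      exp (-((x + 1) * t)) * (1 - exp (-t)) ^ k := by
  rw [show -((x + 1) * t) = -(x * t) + -t by ring, exp_add]
  ring

lemma integrableOn_exp_neg_mul_mul_one_sub_exp_neg_pow (hx : 0 < x) (k : ℕ) :
    IntegrableOn (fun t => exp (-(x * t)) * (1 - exp (-t)) ^ k) (Ioi 0) := by
  induction k generalizing x with
  | zero => simpa using integrableOn_exp_mul_Ioi (neg_lt_zero.2 hx) 0
  | succ k ih =>
    simp only [exp_neg_mul_mul_one_sub_exp_neg_pow_succ]
    exact (ih hx).sub (ih (by linarith))

lemma integral_exp_neg_mul_mul_one_sub_exp_neg_pow (hx : 0 < x) (k : ℕ) :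
    ∫ t in Ioi (0 : ℝ), exp (-(x * t)) * (1 - exp (-t)) ^ k =
      k.factorial / (ascPochhammer ℝ (k + 1)).eval x := by
  induction k generalizing x with
  | zero => simpa using integral_exp_mul_Ioi (neg_lt_zero.2 hx) 0
  | succ k ih =>
    have hx₁ : 0 < x + 1 := by linarith
    have hleft := ascPochhammer_succ_eval_left x (k + 1)
    have hright := ascPochhammer_succ_eval (k + 1) x
    have hpos := ascPochhammer_pos (k + 1) x hx
    have hpos₁ := ascPochhammer_pos (k + 1) (x + 1) hx₁
    simp only [exp_neg_mul_mul_one_sub_exp_neg_pow_succ]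
    rw [integral_sub (integrableOn_exp_neg_mul_mul_one_sub_exp_neg_pow hx k)
      (integrableOn_exp_neg_mul_mul_one_sub_exp_neg_pow hx₁ k), ih hx, ih hx₁,
      div_sub_div _ _ hpos.ne' hpos₁.ne',
      div_eq_div_iff (by positivity) (by rw [hleft]; positivity)]
    push_cast [Nat.factorial_succ] at hright ⊢
    linear_combination (k.factorial : ℝ) * (ascPochhammer ℝ (k + 1)).eval (x + 1) * hright -
      (k.factorial : ℝ) * (ascPochhammer ℝ (k + 1)).eval x * hleft

lemma exists_factorial_div_ascPochhammer_le (x : ℝ) :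
    ∃ G, ∀ n : ℕ,
      n.factorial / (ascPochhammer ℝ (n + 2)).eval x ≤ G * ((n : ℝ) + 1) ^ (-(x + 1)) := by
  obtain ⟨G, hbdd⟩ := (GammaSeq_tendsto_Gamma x).bddAbove_range
  have hG (n : ℕ) :
      n.factorial / (ascPochhammer ℝ (n + 2)).eval x * ((n : ℝ) + 1) ^ (x + 1) ≤ G := by
    refine le_trans (le_of_eq ?_) (hbdd ⟨n + 1, rfl⟩)
    rw [GammaSeq, ← ascPochhammer_eval_eq_prod_range, rpow_add_one (by positivity)]
    push_cast [Nat.factorial_succ]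
    ring
  refine ⟨G, fun n => ?_⟩
  rw [rpow_neg (by positivity), ← div_eq_mul_inv, le_div_iff₀ (by positivity)]
  exact hG n

lemma exists_norm_iteratedDeriv_succ_div_ascPochhammer_le {ε : ℝ} (hε : ε ∈ Ioc 0 1)
    (hx : 0 < x) (C : ℝ) :
    ∃ D, ∀ g : ℂ → ℂ, DifferentiableOn ℂ g (ball 0 1) →
      (∀ u ∈ ball (0 : ℂ) 1, ‖deriv g u‖ ≤ C / ‖1 - u‖) →
      ∀ n : ℕ, ‖iteratedDeriv (n + 1) g 0‖ / (ascPochhammer ℝ (n + 2)).eval x ≤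
        D * ((n : ℝ) + 1) ^ (ε - (x + 1)) := by
  obtain ⟨K, hK⟩ := exists_norm_iteratedDeriv_le_mul_rpow hε
  obtain ⟨G, hG⟩ := exists_factorial_div_ascPochhammer_le x
  refine ⟨C * K * 2 ^ ε * G, fun g hg hg' n => ?_⟩
  have hcoeff := hK C (deriv g) (hg.deriv isOpen_ball) hg'
  have hCK : 0 ≤ C * K := by
    have := (norm_nonneg _).trans (hcoeff 0)
    simp only [Nat.factorial_zero, Nat.cast_one, one_mul, Nat.cast_zero, zero_add] at this
    exact nonneg_of_mul_nonneg_left this (by positivity)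
  have hpos := ascPochhammer_pos (n + 2) x hx
  have hrpow : ((n : ℝ) + 2) ^ ε ≤ 2 ^ ε * ((n : ℝ) + 1) ^ ε := by
    rw [← mul_rpow (by norm_num) (by positivity)]
    exact rpow_le_rpow (by positivity) (by linarith [n.cast_nonneg (α := ℝ)]) hε.1.le
  rw [iteratedDeriv_succ']
  calc ‖iteratedDeriv n (deriv g) 0‖ / (ascPochhammer ℝ (n + 2)).eval x
      ≤ n.factorial * (C * K * ((n : ℝ) + 2) ^ ε) / (ascPochhammer ℝ (n + 2)).eval x := by
        gcongr
        exact hcoeff n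
    _ = C * K * (((n : ℝ) + 2) ^ ε * (n.factorial / (ascPochhammer ℝ (n + 2)).eval x)) := by
        ring
    _ ≤ C * K * (2 ^ ε * ((n : ℝ) + 1) ^ ε * (G * ((n : ℝ) + 1) ^ (-(x + 1)))) := by
        gcongr
        exact hG n
    _ = C * K * 2 ^ ε * G * ((n : ℝ) + 1) ^ (ε - (x + 1)) := by
        rw [sub_eq_add_neg, rpow_add (by positivity)]
        ring

lemma exists_summable_bound_iteratedDeriv_div_ascPochhammer (hx : 0 < x) (C : ℝ) :
    ∃ B : ℕ → ℝ, Summable B ∧ ∀ g : ℂ → ℂ, DifferentiableOn ℂ g (ball 0 1) → ‖g 0‖ ≤ C →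
      (∀ u ∈ ball (0 : ℂ) 1, ‖deriv g u‖ ≤ C / ‖1 - u‖) →
      ∀ k, ‖iteratedDeriv k g 0‖ / (ascPochhammer ℝ (k + 1)).eval x ≤ B k := by
  obtain ⟨ε, hε, hεx⟩ : ∃ ε ∈ Ioc (0 : ℝ) 1, ε < x :=
    ⟨min (x / 2) 1, ⟨by positivity, min_le_right _ _⟩,
      (min_le_left _ _).trans_lt (half_lt_self hx)⟩
  obtain ⟨D, hD⟩ := exists_norm_iteratedDeriv_succ_div_ascPochhammer_le hε hx C
  refine ⟨fun k => Nat.casesOn k (C / x) fun n => D * ((n : ℝ) + 1) ^ (ε - (x + 1)), ?_, ?_⟩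
  · rw [← summable_nat_add_iff 1]
    exact_mod_cast ((summable_nat_add_iff 1).2
      (summable_nat_rpow.2 (show ε - (x + 1) < -1 by linarith))).mul_left D
  · rintro g hg hg₀ hg' (_ | n)
    · simpa using div_le_div_of_nonneg_right hg₀ hx.le
    · exact hD g hg hg' n

lemma one_sub_exp_neg_mem_ball {t : ℝ} (ht : 0 < t) :
    ((1 - exp (-t) : ℝ) : ℂ) ∈ ball (0 : ℂ) 1 := by
  have hexp : exp (-t) < 1 := exp_lt_one_iff.2 (neg_lt_zero.2 ht)
  rw [mem_ball_zero_iff, Complex.norm_real, norm_of_nonneg (by linarith)]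
  linarith [exp_pos (-t)]

lemma exp_neg_mul_mul_eq_tsum {g : ℂ → ℂ} (hg : DifferentiableOn ℂ g (ball 0 1)) (x : ℝ) {t : ℝ}
    (ht : 0 < t) :
    (exp (-(x * t)) : ℂ) * g (1 - exp (-t) : ℝ) = ∑' k : ℕ, (iteratedDeriv k g 0 / k.factorial) *
      ((exp (-(x * t)) * (1 - exp (-t)) ^ k : ℝ) : ℂ) := by
  have htaylor := Complex.hasSum_taylorSeries_on_ball hg (one_sub_exp_neg_mem_ball ht)
  rw [← (htaylor.mul_left (exp (-(x * t)) : ℂ)).tsum_eq]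
  refine tsum_congr fun k => ?_
  simp only [smul_eq_mul, sub_zero]
  push_cast
  ring

lemma integral_norm_mul_exp_neg_mul_mul_one_sub_exp_neg_pow (hx : 0 < x) (c : ℂ) (k : ℕ) :
    ∫ t in Ioi (0 : ℝ), ‖c * ((exp (-(x * t)) * (1 - exp (-t)) ^ k : ℝ) : ℂ)‖ =
      ‖c‖ * (k.factorial / (ascPochhammer ℝ (k + 1)).eval x) := by
  rw [← integral_exp_neg_mul_mul_one_sub_exp_neg_pow hx, ← integral_const_mul]
  refine setIntegral_congr_fun measurableSet_Ioi fun t (ht : 0 < t) => ?_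
  have hexp : 0 ≤ 1 - exp (-t) := sub_nonneg.2 (exp_le_one_iff.2 (neg_nonpos.2 ht.le))
  rw [norm_mul, Complex.norm_real, norm_of_nonneg (by positivity)]

lemma hasSum_iteratedDeriv_div_ascPochhammer {g : ℂ → ℂ} (hg : DifferentiableOn ℂ g (ball 0 1))
    (hx : 0 < x)
    (hsum : Summable fun k => ‖iteratedDeriv k g 0‖ / (ascPochhammer ℝ (k + 1)).eval x) :
    HasSum (fun k => iteratedDeriv k g 0 / ((ascPochhammer ℝ (k + 1)).eval x : ℝ))
      (∫ t in Ioi (0 : ℝ), (exp (-(x * t)) : ℂ) * g (1 - exp (-t) : ℝ)) := by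
  set f : ℕ → ℝ → ℂ := fun k t => (iteratedDeriv k g 0 / k.factorial) *
    ((exp (-(x * t)) * (1 - exp (-t)) ^ k : ℝ) : ℂ)
  have hint (k : ℕ) : Integrable (f k) (volume.restrict (Ioi 0)) :=
    (integrableOn_exp_neg_mul_mul_one_sub_exp_neg_pow hx k).ofReal.const_mul _
  have hvalue (k : ℕ) : ∫ t in Ioi (0 : ℝ), f k t =
      iteratedDeriv k g 0 / ((ascPochhammer ℝ (k + 1)).eval x : ℝ) := by
    rw [integral_const_mul, integral_complex_ofReal,
      integral_exp_neg_mul_mul_one_sub_exp_neg_pow hx, Complex.ofReal_div, Complex.ofReal_natCast]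
    exact div_mul_div_cancel₀ (Nat.cast_ne_zero.2 k.factorial_ne_zero)
  have hnorm (k : ℕ) : ∫ t in Ioi (0 : ℝ), ‖f k t‖ =
      ‖iteratedDeriv k g 0‖ / (ascPochhammer ℝ (k + 1)).eval x := by
    rw [integral_norm_mul_exp_neg_mul_mul_one_sub_exp_neg_pow hx, norm_div, Complex.norm_natCast]
    exact div_mul_div_cancel₀ (by positivity)
  rw [setIntegral_congr_fun measurableSet_Ioi fun t ht => exp_neg_mul_mul_eq_tsum hg x ht]
  simpa only [hvalue] using
    hasSum_integral_of_summable_integral_norm hint (by simpa only [hnorm] using hsum)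

end FactorialSeries

section Laplace

open Real MeasureTheory Metric Set Filter Topology

lemma hasSum_integral_of_nonneg {α ι : Type*} [Countable ι] [MeasurableSpace α] {μ : Measure α}
    {f : ι → α → ℝ} {F : α → ℝ} (hf : ∀ n, AEStronglyMeasurable (f n) μ)
    (hf₀ : ∀ n, 0 ≤ᵐ[μ] f n) (hF : Integrable F μ) (hsum : ∀ᵐ a ∂μ, HasSum (f · a) (F a)) :
    HasSum (fun n => ∫ a, f n a ∂μ) (∫ a, F a ∂μ) := by
  refine hasSum_integral_of_dominated_convergence f hf ?_ ?_ ?_ hsum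
  · intro n
    filter_upwards [hf₀ n] with a ha
    exact (norm_of_nonneg ha).le
  · filter_upwards [hsum] with a ha
    exact ha.summable
  · refine hF.congr ?_
    filter_upwards [hsum] with a ha
    exact ha.tsum_eq.symm

variable {x : ℝ}

lemma integrableOn_exp_neg_mul_mul_of_bounded (hx : 0 < x) {f : ℝ → ℂ} {M : ℝ}
    (hf : AEStronglyMeasurable f (volume.restrict (Ioi 0))) (hM : ∀ t > 0, ‖f t‖ ≤ M) :
    IntegrableOn (fun t => (exp (-(x * t)) : ℂ) * f t) (Ioi 0) := by
  have hexp : IntegrableOn (fun t : ℝ => (exp (-(x * t)) : ℂ)) (Ioi 0) := by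
    simpa [IntegrableOn] using
      (integrableOn_exp_neg_mul_mul_one_sub_exp_neg_pow hx 0).ofReal (𝕜 := ℂ)
  exact hexp.mul_bdd hf ((ae_restrict_mem measurableSet_Ioi).mono hM)

lemma tendsto_exp_neg_mul_mul_of_bounded (hx : 0 < x) {f : ℝ → ℂ} {M : ℝ}
    (hM : ∀ t > 0, ‖f t‖ ≤ M) :
    Tendsto (fun t => (exp (-(x * t)) : ℂ) * f t) atTop (𝓝 0) := by
  have hexp : Tendsto (fun t => exp (-(x * t))) atTop (𝓝 0) :=
    tendsto_exp_neg_atTop_nhds_zero.comp (tendsto_id.const_mul_atTop hx)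
  refine squeeze_zero_norm' ?_ (by simpa using hexp.mul_const M)
  filter_upwards [eventually_gt_atTop 0] with t ht
  rw [norm_mul, Complex.norm_real, norm_of_nonneg (exp_pos _).le]
  gcongr
  exact hM t ht

lemma integral_exp_neg_mul_mul_deriv (hx : 0 < x) {f : ℝ → ℂ} {M M' : ℝ}
    (hf : Differentiable ℝ f) (hM : ∀ t > 0, ‖f t‖ ≤ M) (hM' : ∀ t > 0, ‖deriv f t‖ ≤ M') :
    ∫ t in Ioi (0 : ℝ), (exp (-(x * t)) : ℂ) * deriv f t =
      x * (∫ t in Ioi (0 : ℝ), (exp (-(x * t)) : ℂ) * f t) - f 0 := by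
  have hexp (t : ℝ) :
      HasDerivAt (fun t : ℝ => (exp (-(x * t)) : ℂ)) (-x * (exp (-(x * t)) : ℂ)) t := by
    refine ((((hasDerivAt_id t).const_mul x).fun_neg.exp).ofReal_comp).congr_deriv ?_
    simp [mul_comm]
  have hint := (integrableOn_exp_neg_mul_mul_of_bounded hx
    hf.continuous.aestronglyMeasurable hM).const_mul (-(x : ℂ))
  have hparts := integral_Ioi_mul_deriv_eq_deriv_mul (a := 0) (fun t _ => hexp t)
    (fun t _ => (hf t).hasDerivAt)
    (integrableOn_exp_neg_mul_mul_of_bounded hx (aestronglyMeasurable_deriv f _) hM')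
    (by simpa only [IntegrableOn, Pi.mul_def, mul_assoc] using hint)
    (((hexp 0).continuousAt.mul (hf 0).continuousAt).tendsto.mono_left nhdsWithin_le_nhds)
    (tendsto_exp_neg_mul_mul_of_bounded hx hM)
  rw [hparts]
  simp only [mul_assoc, integral_const_mul, mul_zero, neg_zero, exp_zero, Complex.ofReal_one,
    Pi.mul_apply, one_mul]
  ring

lemma integral_mul_exp_neg_mul {c : ℝ} (hc : 0 < c) :
    ∫ t in Ioi (0 : ℝ), t * exp (-(c * t)) = 1 / c ^ 2 := by
  simpa [show (2 : ℝ) - 1 = 1 by norm_num] using integral_rpow_mul_exp_neg_mul_Ioi two_pos hc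

variable {a s t : ℝ}

lemma hasSum_bernoulliGen (a : ℝ) (ht : 0 < t) :
    HasSum (fun m : ℕ => t * exp (-((1 - a + m) * t))) (bernoulliGen a t).re := by
  have hexp : exp (-t) < 1 := exp_lt_one_iff.2 (neg_lt_zero.2 ht)
  have hgen : (bernoulliGen a t).re = t * exp (-((1 - a) * t)) * (1 - exp (-t))⁻¹ := by
    have hmul := bernoulliGen_mul_exp_sub_one a (t := t) (by simp [pi_pos])
    have hre := congrArg Complex.re hmul
    rw [← Complex.ofReal_exp, ← Complex.ofReal_one, ← Complex.ofReal_sub, Complex.re_mul_ofReal,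
      ← Complex.ofReal_mul, ← Complex.ofReal_exp, ← Complex.ofReal_mul, Complex.ofReal_re] at hre
    rw [← div_eq_mul_inv, eq_div_iff (sub_pos.2 hexp).ne',
      show -((1 - a) * t) = t * a + -t by ring, exp_add, exp_neg]
    field_simp
    rw [mul_comm a t] at hre
    linear_combination hre
  have hterm (m : ℕ) : t * exp (-((1 - a + m) * t)) =
      t * exp (-((1 - a) * t)) * exp (-t) ^ m := by
    rw [← exp_nat_mul, mul_assoc, ← exp_add]
    ring_nf
  simp only [hgen, hterm]
  exact (hasSum_geometric_of_lt_one (exp_pos (-t)).le hexp).mul_left _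

lemma hasDerivAt_bernoulliGen_mul (a s t : ℝ) :
    HasDerivAt (fun t : ℝ => bernoulliGen a (s * t)) (s * deriv (bernoulliGen a) (s * t)) t := by
  have hgen : HasDerivAt (bernoulliGen a) (deriv (bernoulliGen a) (s * t)) (s * t) :=
    (analyticAt_bernoulliGen a (by simp [pi_pos])).differentiableAt.hasDerivAt
  have hscale : HasDerivAt (fun t : ℝ => (s * t : ℂ)) s t := by
    simpa using (Complex.ofRealCLM.hasDerivAt (x := t)).const_mul (s : ℂ)
  exact (hgen.comp t hscale).congr_deriv (mul_comm _ _)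

lemma bernoulliLog_one_sub_exp_neg (a s t : ℝ) :
    bernoulliLog a s (1 - exp (-t) : ℝ) = deriv (fun t : ℝ => bernoulliGen a (s * t)) t := by
  rw [(hasDerivAt_bernoulliGen_mul a s t).deriv, bernoulliLog, ← Complex.ofReal_one,
    ← Complex.ofReal_sub, sub_sub_cancel, ← Complex.ofReal_log (exp_pos _).le, log_exp,
    Complex.ofReal_neg, neg_mul_neg]

lemma exists_norm_bernoulliGen_mul_le (ha : a < 1) (hs : 0 ≤ s) :
    ∃ M, ∀ t > (0 : ℝ), ‖bernoulliGen a (s * t)‖ ≤ M := by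
  obtain ⟨M, hM⟩ := exists_norm_iteratedDeriv_bernoulliGen_le ha 0 0 two_pi_pos
  refine ⟨M, fun t ht => ?_⟩
  simpa using hM (s * t) (by simpa using by positivity) (by simp)

lemma hasSum_integral_exp_neg_mul_mul_bernoulliGen (ha : a < 1) (hx : 0 < x) (hs : 0 < s) :
    HasSum (fun m : ℕ => s / (x + (1 - a + m) * s) ^ 2)
      (∫ t in Ioi (0 : ℝ), (exp (-(x * t)) : ℂ) * bernoulliGen a (s * t)).re := by
  obtain ⟨M, hM⟩ := exists_norm_bernoulliGen_mul_le ha hs.le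
  have hdiff : Differentiable ℝ fun t : ℝ => bernoulliGen a (s * t) :=
    fun t => (hasDerivAt_bernoulliGen_mul a s t).differentiableAt
  have hint := integrableOn_exp_neg_mul_mul_of_bounded hx hdiff.continuous.aestronglyMeasurable hM
  have hvalue (m : ℕ) : s / (x + (1 - a + m) * s) ^ 2 =
      ∫ t in Ioi (0 : ℝ), s * (t * exp (-((x + (1 - a + m) * s) * t))) := by
    have := sub_pos.2 ha
    rw [integral_const_mul, integral_mul_exp_neg_mul (by positivity), mul_one_div]
  simp only [hvalue]
  rw [← RCLike.re_eq_complex_re, ← integral_re hint]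
  refine hasSum_integral_of_nonneg (fun m => by fun_prop) (fun m => ?_) hint.re ?_
  all_goals filter_upwards [ae_restrict_mem measurableSet_Ioi] with t (ht : 0 < t)
  · simp only [Pi.zero_apply]
    positivity
  · have hterm (m : ℕ) : s * (t * exp (-((x + (1 - a + m) * s) * t))) =
        exp (-(x * t)) * (s * t * exp (-((1 - a + m) * (s * t)))) := by
      rw [show -((x + (1 - a + m) * s) * t) = -(x * t) + -((1 - a + m) * (s * t)) by ring, exp_add]
      ring
    simp only [hterm, RCLike.re_eq_complex_re, Complex.re_ofReal_mul]
    simpa using (hasSum_bernoulliGen a (mul_pos hs ht)).mul_left (exp (-(x * t)))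

lemma exists_norm_deriv_bernoulliGen_mul_le (ha : a < 1) (hs : s ∈ Ioc (0 : ℝ) 1) :
    ∃ M, ∀ t > (0 : ℝ), ‖deriv (fun t : ℝ => bernoulliGen a (s * t)) t‖ ≤ M := by
  obtain ⟨M, hM⟩ := exists_norm_bernoulliLog_le ha
  refine ⟨M, fun t ht => ?_⟩
  rw [← bernoulliLog_one_sub_exp_neg]
  exact (hM s (Ioc_subset_Icc_self hs) _ (one_sub_exp_neg_mem_ball ht)).1

lemma exists_summable_bound_stirlingBernoulliSum (ha : a < 1) (hx : 0 < x) :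
    ∃ B : ℕ → ℝ, Summable B ∧ ∀ s ∈ Icc (0 : ℝ) 1, ∀ k,
      ‖stirlingBernoulliSum a (s ^ ·) k / (ascPochhammer ℝ (k + 1)).eval x‖ ≤ B k := by
  obtain ⟨C, hC⟩ := exists_norm_bernoulliLog_le ha
  obtain ⟨B, hB, hle⟩ := exists_summable_bound_iteratedDeriv_div_ascPochhammer hx C
  refine ⟨B, hB, fun s hs k => ?_⟩
  have := hle (bernoulliLog a s)
    (differentiableOn_bernoulliLog a hs)
    (hC s hs 0 (by simp)).1 (fun u hu => (hC s hs u hu).2) k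
  rwa [iteratedDeriv_bernoulliLog_zero a hs, Complex.norm_real,
    ← norm_of_nonneg (ascPochhammer_pos (k + 1) x hx).le, ← norm_div] at this

lemma hasSum_div_add_mul_sq (ha : a < 1) (hx : 0 < x) (hs : s ∈ Ioc (0 : ℝ) 1) :
    HasSum (fun m : ℕ => x * s / (x + (1 - a + m) * s) ^ 2)
      (1 + ∑' k, stirlingBernoulliSum a (s ^ ·) k / (ascPochhammer ℝ (k + 1)).eval x) := by
  have hs' := Ioc_subset_Icc_self hs
  obtain ⟨B, hB, hle⟩ := exists_summable_bound_stirlingBernoulliSum ha hx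
  obtain ⟨M, hM⟩ := exists_norm_bernoulliGen_mul_le ha hs.1.le
  obtain ⟨M', hM'⟩ := exists_norm_deriv_bernoulliGen_mul_le ha hs
  have hsum := hasSum_iteratedDeriv_div_ascPochhammer (differentiableOn_bernoulliLog a hs') hx
    (by simpa [iteratedDeriv_bernoulliLog_zero a hs', abs_div, abs_of_pos, ascPochhammer_pos, hx]
      using (Summable.of_norm_bounded hB (hle s hs')).abs)
  simp only [iteratedDeriv_bernoulliLog_zero a hs', bernoulliLog_one_sub_exp_neg] at hsum
  rw [integral_exp_neg_mul_mul_deriv hx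
    (fun t => (hasDerivAt_bernoulliGen_mul a s t).differentiableAt) hM hM'] at hsum
  have hre := Complex.hasSum_re hsum
  have hpartial := (hasSum_integral_exp_neg_mul_mul_bernoulliGen ha hx hs.1).mul_left x
  simp only [← Complex.ofReal_div, Complex.ofReal_re] at hre
  rw [hre.tsum_eq]
  simpa [mul_div_assoc, bernoulliGen_zero] using hpartial

end Laplace

section Mixture

open MeasureTheory Set Filter

variable {Ω : Type*} [MeasurableSpace Ω] {μ : Measure Ω}

lemma integrable_tsum_of_norm_le {E : Type*} [NormedAddCommGroup E] [CompleteSpace E]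
    [IsFiniteMeasure μ] {f : ℕ → Ω → E} {B : ℕ → ℝ}
    (hf : ∀ k, AEStronglyMeasurable (f k) μ) (hB : Summable B) (hle : ∀ k ω, ‖f k ω‖ ≤ B k) :
    Integrable (fun ω => ∑' k, f k ω) μ := by
  have hsum (ω : Ω) : HasSum (f · ω) (∑' k, f k ω) := (hB.of_norm_bounded (hle · ω)).hasSum
  refine .of_bound ?_ (∑' k, B k) (ae_of_all _ fun ω =>
    tsum_of_norm_bounded hB.hasSum (hle · ω))
  exact aestronglyMeasurable_of_tendsto_ae atTop
    (fun n => Finset.aestronglyMeasurable_fun_sum (Finset.range n) fun k _ => hf k)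
    (ae_of_all _ fun ω => (hsum ω).tendsto_sum_nat)

variable [IsProbabilityMeasure μ] {σ : Ω → ℝ}

lemma integrable_pow_of_mem_Ioc (hσ : Measurable σ) (hmem : ∀ ω, σ ω ∈ Ioc (0 : ℝ) 1) (n : ℕ) :
    Integrable (fun ω => σ ω ^ n) μ := by
  refine .of_bound (hσ.pow_const n).aestronglyMeasurable 1 (ae_of_all _ fun ω => ?_)
  rw [norm_pow, Real.norm_of_nonneg (hmem ω).1.le]
  exact pow_le_one₀ (hmem ω).1.le (hmem ω).2

lemma integral_stirlingBernoulliSum (a : ℝ) (hσ : Measurable σ)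
    (hmem : ∀ ω, σ ω ∈ Ioc (0 : ℝ) 1) (k : ℕ) :
    ∫ ω, stirlingBernoulliSum a (σ ω ^ ·) k ∂μ =
      stirlingBernoulliSum a (fun n => ∫ ω, σ ω ^ n ∂μ) k := by
  unfold stirlingBernoulliSum
  rw [integral_finsetSum _ fun l _ =>
    ((integrable_pow_of_mem_Ioc hσ hmem _).mul_const _).const_mul _]
  simp only [integral_const_mul, integral_mul_const]

variable {a x : ℝ}

lemma summable_stirlingBernoulliSum_moment (ha : a < 1) (hx : 0 < x) (hσ : Measurable σ)
    (hmem : ∀ ω, σ ω ∈ Ioc (0 : ℝ) 1) :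
    Summable fun k => stirlingBernoulliSum a (fun n => ∫ ω, σ ω ^ n ∂μ) k /
      (ascPochhammer ℝ (k + 1)).eval x := by
  obtain ⟨B, hB, hle⟩ := exists_summable_bound_stirlingBernoulliSum ha hx
  refine hB.of_norm_bounded fun k => ?_
  rw [← integral_stirlingBernoulliSum a hσ hmem, ← integral_div]
  exact (norm_integral_le_of_norm_le_const (ae_of_all μ fun ω =>
    hle (σ ω) (Ioc_subset_Icc_self (hmem ω)) k)).trans_eq (by rw [probReal_univ, mul_one])

lemma measurable_stirlingBernoulliSum_pow (a : ℝ) (hσ : Measurable σ) (k : ℕ) :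
    Measurable fun ω => stirlingBernoulliSum a (σ ω ^ ·) k := by
  unfold stirlingBernoulliSum
  fun_prop

lemma hasSum_integral_div_add_mul_sq (ha : a < 1) (hx : 0 < x) (hσ : Measurable σ)
    (hmem : ∀ ω, σ ω ∈ Ioc (0 : ℝ) 1) :
    HasSum (fun m : ℕ => ∫ ω, x * σ ω / (x + (1 - a + m) * σ ω) ^ 2 ∂μ)
      (1 + ∑' k, stirlingBernoulliSum a (fun n => ∫ ω, σ ω ^ n ∂μ) k /
        (ascPochhammer ℝ (k + 1)).eval x) := by
  obtain ⟨B, hB, hle⟩ := exists_summable_bound_stirlingBernoulliSum ha hx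
  set f : ℕ → Ω → ℝ := fun k ω => stirlingBernoulliSum a (σ ω ^ ·) k /
    (ascPochhammer ℝ (k + 1)).eval x
  have hf (k : ℕ) : AEStronglyMeasurable (f k) μ :=
    ((measurable_stirlingBernoulliSum_pow a hσ k).div_const _).aestronglyMeasurable
  have hfle (k : ℕ) (ω : Ω) : ‖f k ω‖ ≤ B k :=
    hle (σ ω) (Ioc_subset_Icc_self (hmem ω)) k
  have hint : Integrable (fun ω => ∑' k, f k ω) μ := integrable_tsum_of_norm_le hf hB hfle
  have hmean : 1 + ∑' k, stirlingBernoulliSum a (fun n => ∫ ω, σ ω ^ n ∂μ) k /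
      (ascPochhammer ℝ (k + 1)).eval x = ∫ ω, (1 + ∑' k, f k ω) ∂μ := by
    have hswap : HasSum (fun k => ∫ ω, f k ω ∂μ) (∫ ω, ∑' k, f k ω ∂μ) :=
      hasSum_integral_of_dominated_convergence (fun k _ => B k) hf
        (fun k => ae_of_all _ (hfle k)) (ae_of_all _ fun _ => hB) (integrable_const _)
        (ae_of_all _ fun ω => (hB.of_norm_bounded (hfle · ω)).hasSum)
    rw [integral_add (integrable_const _) hint, ← hswap.tsum_eq]
    simp [f, integral_div, integral_stirlingBernoulliSum a hσ hmem]
  rw [hmean]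
  refine hasSum_integral_of_nonneg (fun m => ?_) (fun m => ae_of_all _ fun ω => ?_)
    ((integrable_const 1).add hint) (ae_of_all _ fun ω => hasSum_div_add_mul_sq ha hx (hmem ω))
  · exact ((hσ.const_mul x).div
      (((hσ.const_mul (1 - a + m)).const_add x).pow_const 2)).aestronglyMeasurable
  · exact div_nonneg (mul_nonneg hx.le (hmem ω).1.le) (sq_nonneg _)

end Mixture

section Cauchy

open Real MeasureTheory ProbabilityTheory Set Filter Topology Bornology

lemma inv_one_add_sq_mem_Ioc (v : ℝ) : (1 + v ^ 2)⁻¹ ∈ Ioc (0 : ℝ) 1 :=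
  ⟨by positivity, inv_le_one_of_one_le₀ (by nlinarith [sq_nonneg v])⟩

lemma integrable_inv_one_add_sq_pow (n : ℕ) :
    Integrable fun v : ℝ => (1 + v ^ 2)⁻¹ ^ (n + 1) := by
  refine integrable_inv_one_add_sq.mono' (by fun_prop) (ae_of_all _ fun v => ?_)
  obtain ⟨hpos, hle⟩ := inv_one_add_sq_mem_Ioc v
  rw [norm_of_nonneg (by positivity)]
  exact pow_le_of_le_one hpos.le hle n.succ_ne_zero

lemma tendsto_mul_inv_one_add_sq_pow (n : ℕ) :
    Tendsto (fun v : ℝ => v * (1 + v ^ 2)⁻¹ ^ (n + 1)) (cobounded ℝ) (𝓝 0) := by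
  refine squeeze_zero_norm (fun v => ?_) (tendsto_norm_zero.comp tendsto_inv₀_cobounded)
  obtain ⟨hpos, hle⟩ := inv_one_add_sq_mem_Ioc v
  rcases eq_or_ne v 0 with rfl | hv
  · simp
  have hsq : |v| * (1 + v ^ 2)⁻¹ ≤ |v⁻¹| := by
    rw [abs_inv, ← div_eq_mul_inv, inv_eq_one_div,
      div_le_div_iff₀ (by positivity) (by positivity), ← sq, sq_abs]
    linarith
  simp only [Function.comp_apply, norm_mul, norm_pow, norm_of_nonneg hpos.le, norm_eq_abs]
  exact (mul_le_mul_of_nonneg_left (pow_le_of_le_one hpos.le hle n.succ_ne_zero)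
    (abs_nonneg v)).trans hsq

lemma integral_inv_one_add_sq_pow_succ (n : ℕ) :
    ∫ v : ℝ, (1 + v ^ 2)⁻¹ ^ (n + 2) =
      (2 * n + 1 : ℝ) / (2 * n + 2) * ∫ v : ℝ, (1 + v ^ 2)⁻¹ ^ (n + 1) := by
  have hderiv (v : ℝ) : HasDerivAt (fun v : ℝ => v * (1 + v ^ 2)⁻¹ ^ (n + 1))
      ((2 * n + 2) * (1 + v ^ 2)⁻¹ ^ (n + 2) - (2 * n + 1) * (1 + v ^ 2)⁻¹ ^ (n + 1)) v := by
    have hsq : HasDerivAt (fun v : ℝ => 1 + v ^ 2) (2 * v) v := by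
      simpa using (hasDerivAt_pow 2 v).const_add 1
    refine ((hasDerivAt_id' v).fun_mul
      ((hsq.fun_inv (by positivity)).fun_pow (n + 1))).congr_deriv ?_
    have hrel : v ^ 2 * (1 + v ^ 2)⁻¹ = 1 - (1 + v ^ 2)⁻¹ := by
      field_simp
      ring
    rw [Nat.add_sub_cancel, div_eq_mul_inv, ← inv_pow]
    push_cast
    linear_combination (-2 * (n + 1) * (1 + v ^ 2)⁻¹ ^ (n + 1)) * hrel
  have hlim := tendsto_mul_inv_one_add_sq_pow n
  have hparts := integral_of_hasDerivAt_of_tendsto hderiv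
    (((integrable_inv_one_add_sq_pow (n + 1)).const_mul _).sub
      ((integrable_inv_one_add_sq_pow n).const_mul _))
    (hlim.mono_left IsOrderBornology.atBot_le_cobounded)
    (hlim.mono_left IsOrderBornology.atTop_le_cobounded)
  rw [integral_sub ((integrable_inv_one_add_sq_pow (n + 1)).const_mul _)
    ((integrable_inv_one_add_sq_pow n).const_mul _), integral_const_mul,
    integral_const_mul] at hparts
  rw [div_mul_eq_mul_div, eq_div_iff (by positivity)]
  linarith

lemma integral_cauchyMeasure_zero_one (f : ℝ → ℝ) :
    ∫ v, f v ∂cauchyMeasure 0 1 = π⁻¹ * ∫ v, (1 + v ^ 2)⁻¹ * f v := by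
  rw [cauchyMeasure_of_scale_ne_zero 0 one_ne_zero,
    integral_withDensity_eq_integral_toReal_smul (measurable_cauchyPDF 0 1) (by simp [cauchyPDF]),
    ← integral_const_mul]
  refine integral_congr_ae (ae_of_all _ fun v => ?_)
  simp only [cauchyPDF]
  rw [ENNReal.toReal_ofReal (cauchyPDF_pos 0 one_ne_zero v).le, cauchyPDFReal_def']
  simp [mul_assoc]

lemma integral_cauchyMeasure_inv_one_add_sq_pow (l : ℕ) :
    ∫ v, (1 + v ^ 2)⁻¹ ^ (l + 1) ∂cauchyMeasure 0 1 =
      ((2 * l + 1).doubleFactorial : ℝ) / (2 ^ (l + 1) * (l + 1).factorial) := by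
  rw [integral_cauchyMeasure_zero_one]
  simp only [← pow_succ']
  induction l with
  | zero =>
    rw [integral_inv_one_add_sq_pow_succ]
    simp only [Nat.cast_zero, mul_zero, zero_add, pow_one, integral_univ_inv_one_add_sq,
      Nat.doubleFactorial, Nat.factorial_one, Nat.cast_one]
    field_simp
  | succ l ih =>
    rw [integral_inv_one_add_sq_pow_succ, mul_left_comm, ih,
      show 2 * (l + 1) + 1 = (2 * l + 1) + 2 by ring, Nat.doubleFactorial_add_two,
      Nat.factorial_succ (l + 1)]
    push_cast
    field_simp
    ring

lemma integral_cauchyMeasure_div_add_mul_sq {x c : ℝ} (hx : 0 < x) (hc : 0 ≤ c) :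
    ∫ v, x * (1 + v ^ 2)⁻¹ / (x + c * (1 + v ^ 2)⁻¹) ^ 2 ∂cauchyMeasure 0 1 =
      √x / 2 * (x + c) ^ (-(3 : ℝ) / 2) := by
  have hA : 0 < x + c := by positivity
  have hsqrt : √(x / (x + c)) ^ 2 = x / (x + c) := sq_sqrt (by positivity)
  have hscale (v : ℝ) : (1 + v ^ 2)⁻¹ * (x * (1 + v ^ 2)⁻¹ / (x + c * (1 + v ^ 2)⁻¹) ^ 2) =
      x / (x + c) ^ 2 * (1 + (√(x / (x + c)) * v) ^ 2)⁻¹ ^ 2 := by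
    rw [mul_pow, hsqrt]
    field_simp
    ring
  have hrpow : (x + c) ^ (-(3 : ℝ) / 2) = ((x + c) * √(x + c))⁻¹ := by
    rw [sqrt_eq_rpow, ← rpow_one_add' hA.le (by norm_num), ← rpow_neg hA.le]
    norm_num
  rw [integral_cauchyMeasure_zero_one]
  simp only [hscale]
  rw [integral_const_mul, Measure.integral_comp_mul_left fun v : ℝ => (1 + v ^ 2)⁻¹ ^ 2,
    integral_inv_one_add_sq_pow_succ 0, hrpow, sqrt_div hx.le]
  simp only [zero_add, Nat.cast_zero, mul_zero, pow_one, integral_univ_inv_one_add_sq, smul_eq_mul]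
  rw [inv_div, abs_of_nonneg (by positivity)]
  field_simp
  rw [sq_sqrt hx.le, sq_sqrt hA.le, mul_comm]

end Cauchy

section ZetaTail

open Real

lemma sum_Icc_one_eq_sum_range {M : Type*} [AddCommMonoid M] (f : ℕ → M) (n : ℕ) :
    ∑ k ∈ Finset.Icc 1 n, f k = ∑ k ∈ Finset.range n, f (k + 1) := by
  rw [Finset.range_eq_Ico, Finset.sum_Ico_add']
  rfl

lemma summable_natCast_add_one_rpow_neg {s : ℝ} (hs : 1 < s) :
    Summable fun n : ℕ => ((n : ℝ) + 1) ^ (-s) := by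
  exact_mod_cast (summable_nat_add_iff 1).2 (summable_nat_rpow.2 (neg_lt_neg hs))

lemma riemannZeta_ofReal_eq_tsum_rpow {s : ℝ} (hs : 1 < s) :
    riemannZeta s = ((∑' n : ℕ, ((n : ℝ) + 1) ^ (-s) : ℝ) : ℂ) := by
  rw [zeta_eq_tsum_one_div_nat_add_one_cpow (by simpa using hs), Complex.ofReal_tsum]
  refine tsum_congr fun n => ?_
  rw [Complex.ofReal_cpow (by positivity), one_div, ← Complex.cpow_neg]
  push_cast
  rfl

lemma add_one_sub_fract_add {x : ℝ} (hx : 0 ≤ x) (m : ℕ) :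
    x + (1 - Int.fract x + m) = ((m + ⌊x⌋₊ : ℕ) : ℝ) + 1 := by
  push_cast
  rw [natCast_floor_eq_intCast_floor hx]
  linarith [Int.self_sub_fract x]

lemma riemannZeta_ofReal_eq_sum_Icc_floor_add_tsum {s x : ℝ} (hs : 1 < s) (hx : 0 ≤ x) :
    riemannZeta s = ((∑ k ∈ Finset.Icc 1 ⌊x⌋₊, (k : ℝ) ^ (-s) +
      ∑' m : ℕ, (x + (1 - Int.fract x + m)) ^ (-s) : ℝ) : ℂ) := by
  rw [riemannZeta_ofReal_eq_tsum_rpow hs,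
    ← (summable_natCast_add_one_rpow_neg hs).sum_add_tsum_nat_add ⌊x⌋₊, sum_Icc_one_eq_sum_range]
  simp only [add_one_sub_fract_add hx, Nat.cast_add_one]

end ZetaTail

section PaperNotation

lemma stirling1Unsigned_eq_stirlingFirst (k l : ℕ) :
    stirling1Unsigned k l = Nat.stirlingFirst k l := by
  fun_induction stirling1Unsigned k l with
  | case1 => rfl
  | case2 => rfl
  | case3 k ih => cases k <;> simp [ih]
  | case4 k l ih₁ ih₂ => rw [ih₁, ih₂, Nat.stirlingFirst_succ_succ, add_comm]

lemma bernPoly_eq_aeval_bernoulli (n : ℕ) (a : ℝ) :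
    bernPoly n a = (Polynomial.bernoulli n).aeval a := by
  simp only [bernPoly, Polynomial.bernoulli, map_sum, Polynomial.aeval_monomial]
  refine Finset.sum_congr rfl fun k _ => ?_
  rw [map_mul]
  simp only [eq_ratCast, Rat.cast_natCast]
  ring

lemma ofReal_mul_risingProd (x : ℝ) (k : ℕ) :
    (x : ℂ) * risingProd x k = ((ascPochhammer ℝ (k + 1)).eval x : ℝ) := by
  rw [ascPochhammer_eval_eq_prod_range, Finset.prod_range_succ', risingProd, mul_comm]
  push_cast
  simp only [add_assoc, add_zero]

lemma stirlingBernoulliSum_succ (a : ℝ) (m : ℕ → ℝ) (k : ℕ) :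
    stirlingBernoulliSum a m (k + 1) = ∑ l ∈ Finset.Icc 1 (k + 1),
      (stirling1Unsigned (k + 1) l : ℝ) * (m (l + 1) * bernPoly (l + 1) a) := by
  simp only [stirling1Unsigned_eq_stirlingFirst, bernPoly_eq_aeval_bernoulli]
  rw [stirlingBernoulliSum, Finset.sum_range_succ', Nat.stirlingFirst_succ_zero, Nat.cast_zero,
    zero_mul, add_zero, sum_Icc_one_eq_sum_range]

lemma neg_one_pow_mul_sum_S1_div_risingProd (a x : ℝ) (m : ℕ → ℝ) (k : ℕ) :
    (-1 : ℂ) ^ (k + 1 + 1) * (∑ l ∈ Finset.Icc 1 (k + 1),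
        (-1 : ℂ) ^ l * (m (l + 1) : ℂ) * (S1 (k + 1) l : ℂ) * (bernPoly (l + 1) a : ℂ)) /
      ((x : ℂ) * risingProd (x : ℂ) (k + 1)) =
    ((-(stirlingBernoulliSum a m (k + 1) / (ascPochhammer ℝ (k + 2)).eval x) : ℝ) : ℂ) := by
  rw [ofReal_mul_risingProd, ← neg_div, Complex.ofReal_div, stirlingBernoulliSum_succ,
    Finset.mul_sum, ← Finset.sum_neg_distrib, Complex.ofReal_sum]
  congr 1
  refine Finset.sum_congr rfl fun l _ => ?_
  have hsign : (-1 : ℂ) ^ (k + 1 + 1) * (-1) ^ l * (-1) ^ (k + 1 + l) = -1 := by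
    rw [← pow_add, ← pow_add]
    exact Odd.neg_one_pow ⟨k + 1 + l, by ring⟩
  rw [S1]
  push_cast
  linear_combination
    ((stirling1Unsigned (k + 1) l : ℂ) * m (l + 1) * (bernPoly (l + 1) a : ℂ)) * hsign

lemma stirlingBernoulliSum_zero (a : ℝ) (m : ℕ → ℝ) :
    stirlingBernoulliSum a m 0 = m 1 * bernPoly 1 a := by
  simp [stirlingBernoulliSum, bernPoly_eq_aeval_bernoulli]

end PaperNotation

section ArcsineMoments

open ProbabilityTheory Real

/-- The `n`-th moment of `(1 + v²)⁻¹` under the standard Cauchy law (equivalently, of the arcsine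
law on `[0, 1]`), which the paper writes as `(2l+1)!!/(2^{l+1} (l+1)!)` for `n = l + 1`. -/
noncomputable def arcsineMoment (n : ℕ) : ℝ := ∫ v, (1 + v ^ 2)⁻¹ ^ n ∂cauchyMeasure 0 1

lemma ofReal_arcsineMoment_succ (l : ℕ) :
    (arcsineMoment (l + 1) : ℂ) =
      ((2 * l + 1).doubleFactorial : ℂ) / (2 ^ (l + 1) * ((l + 1).factorial : ℂ)) := by
  rw [arcsineMoment, integral_cauchyMeasure_inv_one_add_sq_pow]
  push_cast
  rfl

variable {a x : ℝ}

lemma summable_stirlingBernoulliSum_arcsineMoment (ha : a < 1) (hx : 0 < x) :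
    Summable fun k => stirlingBernoulliSum a arcsineMoment k / (ascPochhammer ℝ (k + 1)).eval x :=
  summable_stirlingBernoulliSum_moment ha hx (by fun_prop) inv_one_add_sq_mem_Ioc

lemma tsum_add_rpow_neg_three_halves (ha : a < 1) (hx : 0 < x) :
    √x / 2 * ∑' m : ℕ, (x + (1 - a + m)) ^ (-(3 : ℝ) / 2) =
      1 + ∑' k, stirlingBernoulliSum a arcsineMoment k / (ascPochhammer ℝ (k + 1)).eval x := by
  rw [← tsum_mul_left]
  have hterm (m : ℕ) : √x / 2 * (x + (1 - a + m)) ^ (-(3 : ℝ) / 2) =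
      ∫ v, x * (1 + v ^ 2)⁻¹ / (x + (1 - a + m) * (1 + v ^ 2)⁻¹) ^ 2 ∂cauchyMeasure 0 1 :=
    (integral_cauchyMeasure_div_add_mul_sq hx
      (add_nonneg (sub_nonneg.2 ha.le) m.cast_nonneg)).symm
  simp only [hterm]
  exact (hasSum_integral_div_add_mul_sq ha hx (by fun_prop) inv_one_add_sq_mem_Ioc).tsum_eq

lemma tsum_stirlingBernoulliSum_arcsineMoment_succ (ha : a < 1) (hx : 0 < x) :
    ∑' k, stirlingBernoulliSum a arcsineMoment (k + 1) / (ascPochhammer ℝ (k + 2)).eval x =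
      √x / 2 * ∑' m : ℕ, (x + (1 - a + m)) ^ (-(3 : ℝ) / 2) - 1 - bernPoly 1 a / (2 * x) := by
  have hmoment : arcsineMoment 1 = 1 / 2 := by
    rw [arcsineMoment, integral_cauchyMeasure_inv_one_add_sq_pow 0]
    simp
  rw [tsum_add_rpow_neg_three_halves ha hx,
    (summable_stirlingBernoulliSum_arcsineMoment ha hx).tsum_eq_zero_add,
    stirlingBernoulliSum_zero, hmoment, zero_add, ascPochhammer_one, Polynomial.eval_X]
  field_simp
  ring

end ArcsineMoments

end ExtendedFaulhaber

open Finset in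
/-- Extended generalized Faulhaber summation formula for the partial sums of `ζ(3/2)`
(summation formula 7, formula (53) of the paper). -/
theorem extended_faulhaber_zeta_three_halves (x : ℝ) (hx : 0 < x) :
    Summable (fun k : ℕ =>
      ‖(-1 : ℂ) ^ (k + 1 + 1) *
          (∑ l ∈ Icc 1 (k + 1),
            (-1 : ℂ) ^ l * ((Nat.doubleFactorial (2 * l + 1) : ℂ) /
                (2 ^ (l + 1) * ((l + 1).factorial : ℂ))) *
              (S1 (k + 1) l : ℂ) * (bernPoly (l + 1) (Int.fract x) : ℂ)) /
        ((x : ℂ) * risingProd (x : ℂ) (k + 1))‖) ∧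
    ((∑ k ∈ Icc 1 ⌊x⌋₊, (k : ℝ) ^ (-(3 : ℝ) / 2) : ℝ) : ℂ) =
      riemannZeta (3 / 2) - 2 / (Real.sqrt x : ℂ) -
        (bernPoly 1 (Int.fract x) : ℂ) / ((x : ℂ) * (Real.sqrt x : ℂ)) +
        2 / (Real.sqrt x : ℂ) *
          ∑' k : ℕ,
            (-1 : ℂ) ^ (k + 1 + 1) *
                (∑ l ∈ Icc 1 (k + 1),
                  (-1 : ℂ) ^ l * ((Nat.doubleFactorial (2 * l + 1) : ℂ) /
                      (2 ^ (l + 1) * ((l + 1).factorial : ℂ))) *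
                    (S1 (k + 1) l : ℂ) * (bernPoly (l + 1) (Int.fract x) : ℂ)) /
              ((x : ℂ) * risingProd (x : ℂ) (k + 1)) := by
  open ExtendedFaulhaber in
  have hfract := Int.fract_lt_one x
  simp only [← ofReal_arcsineMoment_succ, neg_one_pow_mul_sum_S1_div_risingProd]
  constructor
  · simp only [Complex.norm_real, norm_neg]
    exact ((summable_nat_add_iff 1).2
      (summable_stirlingBernoulliSum_arcsineMoment hfract hx)).norm
  · have hzeta := riemannZeta_ofReal_eq_sum_Icc_floor_add_tsum
      (s := 3 / 2) (by norm_num) hx.le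
    simp only [← neg_div, Complex.ofReal_div, Complex.ofReal_ofNat] at hzeta
    rw [hzeta, ← Complex.ofReal_tsum, tsum_neg,
      tsum_stirlingBernoulliSum_arcsineMoment_succ hfract hx]
    norm_cast
    field_simp
    ring
end

section
/- Generalized convergent Stirling summation formula for the log-factorial sum: Let x ∈ ℝ with x > 0 and let a ∈ ℕ₀. Then the series ∑_{k=1}^{∞} (−1)^k (∑_{l=1}^{k} ((−1)^l/((l+a)(l+a+1))) S_k^{(1)}(l) B_{l+a+1}({x})) / ((x+1)(x+2)⋯(x+k)) converges absolutely, and ∑_{k=1}^{⌊x⌋} ln(k) = x ln(x) − x + (1/2) ln(2π) − B_1({x}) ln(x) + ∑_{k=1}^{a} B_{k+1}({x})/(k(k+1) x^k) + (1/x^a) ∑_{k=1}^{∞} (−1)^k (∑_{l=1}^{k} ((−1)^l/((l+a)(l+a+1))) S_k^{(1)}(l) B_{l+a+1}({x})) / ((x+1)(x+2)⋯(x+k)). -/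
/-!
Let `S` have the logistic density `π / (2 * cosh (π * s) ^ 2)`. Integrating a function against the
meromorphic continuation of this density around the boundary of a vertical strip of width one picks
up a single residue, so that `E[G (c + 1 / 2 + i * S)] - E[G (c - 1 / 2 + i * S)] = G' c`. For
powers this yields `E[Z ^ n] = B_n f` with `Z = f - 1 / 2 - i * S`; for `H w = w * log w - w` it
says that `E[H (n + 1 / 2 + i * S)]` and `log n!` satisfy the same recursion, and Stirling's formula
identifies their difference as `log (2 * π) / 2`.

If `f = x - n`, then `x - Z = n + 1 / 2 + i * S`. Taylor's formula for `H (x - Z)` at `x` therefore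
expresses `log n!` through the moments of `Z` and the remainder
`E[Z ^ (a + 2) * T ^ a * (1 - T) / (x - T * Z)]`, where `T` is uniform on `(0, 1]`. The inverse
factorial series `1 / (x - y) = ∑ (y + 1) ⋯ (y + k) / ((x + 1) ⋯ (x + k + 1))` at `y = T * Z` turns
this remainder into the series of the theorem. Summation and expectation may be exchanged because
Euler's product for `sinh` bounds `|(y + 1) ⋯ (y + k)|` by a multiple of `cosh (π * S)`, which the
density compensates.
-/

open Real MeasureTheory Filter Topology
open Complex (I)

section LogisticMeasure

lemma exp_abs_le_two_mul_cosh_pi_mul (s : ℝ) : exp |s| ≤ 2 * cosh (π * s) := by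
  have hs : |s| ≤ |π * s| := by
    rw [abs_mul, abs_of_pos pi_pos]
    exact le_mul_of_one_le_left (abs_nonneg s) (by linarith [pi_gt_three])
  have hcosh : cosh |s| ≤ cosh (π * s) := by rwa [cosh_le_cosh, abs_abs]
  rw [cosh_eq] at hcosh
  linarith [exp_pos (-|s|)]

lemma one_add_abs_pow_div_cosh_le (n : ℕ) (s : ℝ) :
    (1 + |s|) ^ n / cosh (π * s) ≤ 2 * exp 1 * (n + 2).factorial * (1 + s ^ 2)⁻¹ := by
  have hexp : (1 + |s|) ^ (n + 2) ≤ exp 1 * exp |s| * (n + 2).factorial := by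
    rw [← exp_add, ← div_le_iff₀ (by positivity)]
    exact pow_div_factorial_le_exp _ (by positivity) _
  have hsq : 1 + s ^ 2 ≤ (1 + |s|) ^ 2 := by nlinarith [abs_nonneg s, sq_abs s]
  rw [← div_eq_mul_inv, div_le_div_iff₀ (cosh_pos _) (by positivity)]
  calc (1 + |s|) ^ n * (1 + s ^ 2) ≤ (1 + |s|) ^ n * (1 + |s|) ^ 2 := by gcongr
    _ = (1 + |s|) ^ (n + 2) := by ring
    _ ≤ exp 1 * exp |s| * (n + 2).factorial := hexp
    _ ≤ exp 1 * (2 * cosh (π * s)) * (n + 2).factorial := by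
      gcongr
      exact exp_abs_le_two_mul_cosh_pi_mul s
    _ = 2 * exp 1 * (n + 2).factorial * cosh (π * s) := by ring

lemma integrable_one_add_abs_pow_div_cosh (n : ℕ) :
    Integrable fun s : ℝ ↦ (1 + |s|) ^ n / cosh (π * s) := by
  refine (integrable_inv_one_add_sq.const_mul (2 * exp 1 * (n + 2).factorial)).mono' ?_
    (Eventually.of_forall fun s ↦ ?_)
  · exact (Continuous.div (by fun_prop) (by fun_prop)
      fun s ↦ (cosh_pos (π * s)).ne').aestronglyMeasurable
  · have := cosh_pos (π * s)
    rw [norm_of_nonneg (by positivity)]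
    exact one_add_abs_pow_div_cosh_le n s

lemma tendsto_one_add_abs_pow_div_cosh (n : ℕ) :
    Tendsto (fun s : ℝ ↦ (1 + |s|) ^ n / cosh (π * s)) (comap abs atTop) (𝓝 0) := by
  have hinv : Tendsto (fun s : ℝ ↦ (1 + s ^ 2)⁻¹) (comap abs atTop) (𝓝 0) := by
    have hsq : Tendsto (fun s : ℝ ↦ s ^ 2) (comap abs atTop) atTop := by
      simpa only [Function.comp_def, sq_abs] using
        (tendsto_pow_atTop (α := ℝ) two_ne_zero).comp (tendsto_comap (f := abs))
    exact (tendsto_atTop_add_const_left _ 1 hsq).inv_tendsto_atTop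
  have hbound := hinv.const_mul (2 * exp 1 * (n + 2).factorial)
  rw [mul_zero] at hbound
  refine squeeze_zero (fun s ↦ ?_) (one_add_abs_pow_div_cosh_le n) hbound
  have := cosh_pos (π * s)
  positivity

/-- The density of the centred logistic distribution of scale `1 / (2 * π)`. -/
noncomputable def logisticDensity (s : ℝ) : ℝ := π / 2 / cosh (π * s) ^ 2

lemma logisticDensity_nonneg (s : ℝ) : 0 ≤ logisticDensity s := by
  unfold logisticDensity
  positivity

lemma continuous_logisticDensity : Continuous logisticDensity :=
  Continuous.div (by fun_prop) (by fun_prop) fun s ↦ pow_ne_zero 2 (cosh_pos (π * s)).ne'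

/-- The centred logistic distribution of scale `1 / (2 * π)`: its density is, up to a constant,
the restriction of `1 / sin (π * w) ^ 2` to the lines `w.re = ± 1 / 2`, which is what lets
expectations be computed by shifting contours. -/
noncomputable def logisticMeasure : Measure ℝ :=
  volume.withDensity fun s ↦ ENNReal.ofReal (logisticDensity s)

section

variable {E : Type*} [NormedAddCommGroup E] [NormedSpace ℝ E] {F : ℝ → E}

lemma integral_logisticMeasure (F : ℝ → E) :
    ∫ s, F s ∂logisticMeasure = ∫ s, logisticDensity s • F s := by
  have hmeas : Measurable fun s ↦ ENNReal.ofReal (logisticDensity s) :=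
    continuous_logisticDensity.measurable.ennreal_ofReal
  simp only [logisticMeasure, integral_withDensity_eq_integral_toReal_smul hmeas
    (Eventually.of_forall fun _ ↦ ENNReal.ofReal_lt_top),
    ENNReal.toReal_ofReal (logisticDensity_nonneg _)]

lemma integrable_logisticMeasure_iff :
    Integrable F logisticMeasure ↔ Integrable fun s ↦ logisticDensity s • F s := by
  have hmeas : Measurable fun s ↦ ENNReal.ofReal (logisticDensity s) :=
    continuous_logisticDensity.measurable.ennreal_ofReal
  simp only [logisticMeasure, integrable_withDensity_iff_integrable_smul' hmeas
    (Eventually.of_forall fun _ ↦ ENNReal.ofReal_lt_top),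
    ENNReal.toReal_ofReal (logisticDensity_nonneg _)]

end

lemma integrable_one_add_abs_pow_mul_cosh (n : ℕ) :
    Integrable (fun s ↦ (1 + |s|) ^ n * cosh (π * s)) logisticMeasure := by
  rw [integrable_logisticMeasure_iff]
  refine ((integrable_one_add_abs_pow_div_cosh n).const_mul (π / 2)).congr
    (Eventually.of_forall fun s ↦ ?_)
  have := (cosh_pos (π * s)).ne'
  simp only [logisticDensity, smul_eq_mul]
  field_simp

lemma integrable_logisticMeasure_of_norm_le {E : Type*} [NormedAddCommGroup E] {F : ℝ → E}
    (hF : Continuous F) {C : ℝ} {m : ℕ} (hC : ∀ s, ‖F s‖ ≤ C * (1 + |s|) ^ m) :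
    Integrable F logisticMeasure := by
  have hC0 : 0 ≤ C := by simpa using (norm_nonneg _).trans (hC 0)
  refine ((integrable_one_add_abs_pow_mul_cosh m).const_mul C).mono' hF.aestronglyMeasurable
    (Eventually.of_forall fun s ↦ (hC s).trans ?_)
  gcongr
  exact le_mul_of_one_le_right (by positivity) (one_le_cosh _)

lemma hasDerivAt_tanh_pi_mul_div_two (s : ℝ) :
    HasDerivAt (fun s ↦ tanh (π * s) / 2) (logisticDensity s) s := by
  have hcosh := (cosh_pos (π * s)).ne'
  have hlin : HasDerivAt (fun s ↦ π * s) π s := by simpa using (hasDerivAt_id s).const_mul π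
  simp only [tanh_eq_sinh_div_cosh]
  refine ((hlin.sinh.div hlin.cosh hcosh).div_const 2).congr_deriv ?_
  have := cosh_sq (π * s)
  unfold logisticDensity
  field_simp
  linarith

lemma tendsto_tanh_atTop : Tendsto tanh atTop (𝓝 1) := by
  have hexp : Tendsto (fun u : ℝ ↦ 1 - 2 / (exp (2 * u) + 1)) atTop (𝓝 (1 - 0)) :=
    tendsto_const_nhds.sub <| tendsto_const_nhds.div_atTop <| tendsto_atTop_add_const_right _ _ <|
      tendsto_exp_atTop.comp (tendsto_id.const_mul_atTop two_pos)
  rw [sub_zero] at hexp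
  refine hexp.congr fun u ↦ ?_
  rw [tanh_eq_sinh_div_cosh, sinh_eq, cosh_eq, two_mul, exp_add, exp_neg]
  have := exp_pos u
  field_simp
  ring

lemma tendsto_tanh_atBot : Tendsto tanh atBot (𝓝 (-1)) := by
  refine (tendsto_tanh_atTop.comp tendsto_neg_atBot_atTop).neg.congr fun u ↦ ?_
  simp only [Function.comp_apply, tanh_neg, neg_neg]

lemma integrable_logisticDensity : Integrable logisticDensity := by
  simpa using integrable_logisticMeasure_iff.1
    (integrable_logisticMeasure_of_norm_le (F := fun _ ↦ (1 : ℝ)) (C := 1) (m := 0)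
      continuous_const (by simp))

lemma integral_logisticDensity : ∫ s, logisticDensity s = 1 := by
  rw [integral_of_hasDerivAt_of_tendsto hasDerivAt_tanh_pi_mul_div_two integrable_logisticDensity
    ((tendsto_tanh_atBot.comp (tendsto_id.const_mul_atBot pi_pos)).div_const 2)
    ((tendsto_tanh_atTop.comp (tendsto_id.const_mul_atTop pi_pos)).div_const 2)]
  norm_num

instance : IsProbabilityMeasure logisticMeasure where
  measure_univ := by
    rw [logisticMeasure, withDensity_apply _ MeasurableSet.univ, setLIntegral_univ,
      ← ofReal_integral_eq_lintegral_ofReal integrable_logisticDensity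
        (Eventually.of_forall logisticDensity_nonneg), integral_logisticDensity, ENNReal.ofReal_one]

end LogisticMeasure

section ContourShift

lemma integral_vertical_line_eq {F : ℂ → ℂ} {a b : ℝ}
    (hF : DifferentiableOn ℂ F (Complex.re ⁻¹' Set.uIcc a b))
    (ha : Integrable fun y : ℝ ↦ F (a + y * I)) (hb : Integrable fun y : ℝ ↦ F (b + y * I))
    (hbot : Tendsto (fun T : ℝ ↦ ∫ x in a..b, F (x + T * I)) atBot (𝓝 0))
    (htop : Tendsto (fun T : ℝ ↦ ∫ x in a..b, F (x + T * I)) atTop (𝓝 0)) :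
    ∫ y : ℝ, F (b + y * I) = ∫ y : ℝ, F (a + y * I) := by
  have hrect (T : ℝ) : (∫ x in a..b, F (x + (-T : ℝ) * I)) - (∫ x in a..b, F (x + T * I)) +
      I • (∫ y in (-T)..T, F (b + y * I)) - I • (∫ y in (-T)..T, F (a + y * I)) = 0 :=
    Complex.integral_boundary_rect_eq_zero_of_differentiableOn F ⟨a, -T⟩ ⟨b, T⟩
      (hF.mono fun w hw ↦ hw.1)
  have hvertical {H : ℝ → ℂ} (hH : Integrable H) :
      Tendsto (fun T : ℝ ↦ ∫ y in (-T)..T, H y) atTop (𝓝 (∫ y, H y)) :=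
    intervalIntegral_tendsto_integral hH tendsto_neg_atTop_atBot tendsto_id
  have hlim := (((hbot.comp tendsto_neg_atTop_atBot).sub htop).add
    ((hvertical hb).const_smul I)).sub ((hvertical ha).const_smul I)
  have hzero := tendsto_nhds_unique (hlim.congr hrect) tendsto_const_nhds
  rw [sub_zero, zero_add, ← smul_sub, smul_eq_zero_iff_right Complex.I_ne_zero] at hzero
  exact sub_eq_zero.1 hzero

lemma abs_sinh_im_le_norm_sin (w : ℂ) : |sinh w.im| ≤ ‖Complex.sin w‖ := by
  have hnorm : ‖Complex.sin w‖ ^ 2 = sin w.re ^ 2 + sinh w.im ^ 2 := by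
    rw [Complex.sin_eq, ← Complex.normSq_eq_norm_sq, ← Complex.ofReal_sin, ← Complex.ofReal_cos,
      ← Complex.ofReal_sinh, ← Complex.ofReal_cosh, ← Complex.ofReal_mul, ← Complex.ofReal_mul,
      Complex.normSq_add_mul_I]
    linear_combination sin w.re ^ 2 * cosh_sq w.im + sinh w.im ^ 2 * sin_sq_add_cos_sq w.re
  refine abs_le_of_sq_le_sq ?_ (norm_nonneg _)
  linarith [sq_nonneg (sin w.re)]

lemma sin_pi_mul_ne_zero_of_abs_re_lt_one {w : ℂ} (hw : |w.re| < 1) (h0 : w ≠ 0) :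
    Complex.sin (π * w) ≠ 0 := by
  rw [Complex.sin_ne_zero_iff]
  intro k hk
  rw [mul_comm (k : ℂ)] at hk
  obtain rfl : w = k := mul_left_cancel₀ (Complex.ofReal_ne_zero.2 pi_ne_zero) hk
  rw [Complex.intCast_re, ← Int.cast_abs, ← Int.cast_one, Int.cast_lt, Int.abs_lt_one_iff] at hw
  exact h0 (by rw [hw, Int.cast_zero])

lemma sin_sq_pi_mul_half_add_mul_I (s : ℝ) :
    Complex.sin (π * (1 / 2 + s * I)) ^ 2 = (cosh (π * s) : ℂ) ^ 2 := by
  have harg : (π * (1 / 2 + s * I) : ℂ) = (π * s : ℝ) * I + π / 2 := by push_cast; ring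
  rw [harg, Complex.sin_add_pi_div_two, Complex.cos_mul_I, Complex.ofReal_cosh]

lemma sin_sq_pi_mul_neg_half_add_mul_I (s : ℝ) :
    Complex.sin (π * (-1 / 2 + s * I)) ^ 2 = (cosh (π * s) : ℂ) ^ 2 := by
  have harg : (π * (-1 / 2 + s * I) : ℂ) = π * (1 / 2 + s * I) - π := by ring
  rw [harg, Complex.sin_sub_pi, neg_sq, sin_sq_pi_mul_half_add_mul_I]

lemma cosh_pi_mul_le_two_mul_sinh_sq {T : ℝ} (hT : 1 ≤ |T|) :
    cosh (π * T) ≤ 2 * sinh (π * T) ^ 2 := by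
  have hpiT : π * |T| ≤ |sinh (π * T)| := by
    rw [abs_sinh, abs_mul, abs_of_pos pi_pos]
    exact self_le_sinh_iff.2 (by positivity)
  have hsinh : 1 ≤ sinh (π * T) ^ 2 := by
    rw [← sq_abs]
    exact one_le_pow₀ (by nlinarith [pi_gt_three])
  nlinarith [cosh_sq (π * T), one_le_cosh (π * T)]

/-- The closed vertical strip of width one centred at the real number `c`. -/
def unitStrip (c : ℝ) : Set ℂ := Complex.re ⁻¹' Set.Icc (c - 1 / 2) (c + 1 / 2)

lemma mem_unitStrip {c : ℝ} {w : ℂ} : w ∈ unitStrip c ↔ |w.re - c| ≤ 1 / 2 := by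
  rw [abs_sub_le_iff, unitStrip, Set.mem_preimage, Set.mem_Icc]
  constructor <;> rintro ⟨h₁, h₂⟩ <;> constructor <;> linarith

lemma norm_sub_ofReal_le_of_mem_unitStrip {c : ℝ} {w : ℂ} (hw : w ∈ unitStrip c) :
    ‖w - c‖ ≤ 1 + |w.im| := by
  have hnorm := Complex.norm_le_abs_re_add_abs_im (w - c)
  simp only [Complex.sub_re, Complex.sub_im, Complex.ofReal_re, Complex.ofReal_im, sub_zero]
    at hnorm
  linarith [mem_unitStrip.1 hw]

lemma unitStrip_mem_nhds (c : ℝ) : unitStrip c ∈ 𝓝 (c : ℂ) :=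
  Complex.continuous_re.continuousAt.preimage_mem_nhds <| by
    rw [Complex.ofReal_re]
    exact Icc_mem_nhds (by linarith) (by linarith)

variable {c : ℝ} {G : ℂ → ℂ}

lemma dslope_sin_pi_mul_sub_ne_zero {w : ℂ} (hw : w ∈ unitStrip c) :
    dslope (fun z : ℂ ↦ Complex.sin (π * (z - c))) c w ≠ 0 := by
  rcases eq_or_ne w c with rfl | hwc
  · have hderiv : HasDerivAt (fun z : ℂ ↦ Complex.sin (π * (z - c)))
        (Complex.cos (π * (c - c)) * (π * 1)) c :=
      (Complex.hasDerivAt_sin _).comp (c : ℂ) (((hasDerivAt_id _).sub_const _).const_mul _)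
    rw [dslope_same, hderiv.deriv]
    simp [pi_ne_zero]
  · rw [dslope_of_ne _ hwc, slope_def_field, sub_self, mul_zero, Complex.sin_zero, sub_zero]
    have hwc' := sub_ne_zero.2 hwc
    refine div_ne_zero (sin_pi_mul_ne_zero_of_abs_re_lt_one ?_ hwc') hwc'
    rw [Complex.sub_re, Complex.ofReal_re]
    linarith [mem_unitStrip.1 hw]

lemma exists_differentiableOn_eq_div_sin_sq (hG : DifferentiableOn ℂ G (unitStrip c))
    (hG0 : G c = 0) (hG1 : deriv G c = 0) :
    ∃ F : ℂ → ℂ, DifferentiableOn ℂ F (unitStrip c) ∧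
      ∀ w ≠ (c : ℂ), F w = G w / Complex.sin (π * (w - c)) ^ 2 := by
  have hnhds := unitStrip_mem_nhds c
  refine ⟨fun w ↦ dslope (dslope G c) c w /
    dslope (fun z : ℂ ↦ Complex.sin (π * (z - c))) c w ^ 2, ?_, fun w hw ↦ ?_⟩
  · refine DifferentiableOn.div ?_ (DifferentiableOn.pow ?_ 2)
      fun w hw ↦ pow_ne_zero 2 (dslope_sin_pi_mul_sub_ne_zero hw)
    · rwa [Complex.differentiableOn_dslope hnhds, Complex.differentiableOn_dslope hnhds]
    · rw [Complex.differentiableOn_dslope hnhds]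
      fun_prop
  · have hwc := sub_ne_zero.2 hw
    simp only [dslope_of_ne _ hw, slope_def_field, dslope_same, hG0, hG1, sub_self, mul_zero,
      Complex.sin_zero, sub_zero]
    field_simp

lemma tendsto_integral_horizontal_div_sin_sq {l : Filter ℝ} (hl : l ≤ comap abs atTop)
    {C : ℝ} {m : ℕ} (hC : ∀ w ∈ unitStrip c, ‖G w‖ ≤ C * (1 + |w.im|) ^ m) {F : ℂ → ℂ}
    (hF : ∀ w ≠ (c : ℂ), F w = G w / Complex.sin (π * (w - c)) ^ 2) :
    Tendsto (fun T : ℝ ↦ ∫ x in (c - 1 / 2)..(c + 1 / 2), F (x + T * I)) l (𝓝 0) := by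
  have hbound (T : ℝ) (hT : 1 ≤ |T|) (x : ℝ) (hx : x ∈ Set.uIoc (c - 1 / 2) (c + 1 / 2)) :
      ‖F (x + T * I)‖ ≤ 2 * C * ((1 + |T|) ^ m / cosh (π * T)) := by
    rw [Set.uIoc_of_le (by linarith)] at hx
    have hmem : (x + T * I : ℂ) ∈ unitStrip c := by
      simpa [unitStrip] using Set.Ioc_subset_Icc_self hx
    have hne : (x + T * I : ℂ) ≠ c := fun h ↦ by
      obtain rfl : T = 0 := by simpa using congrArg Complex.im h
      norm_num at hT
    have hGT : ‖G (x + T * I)‖ ≤ C * (1 + |T|) ^ m := by simpa using hC _ hmem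
    have hsin : |sinh (π * T)| ≤ ‖Complex.sin (π * (x + T * I - c))‖ := by
      simpa using abs_sinh_im_le_norm_sin (π * (x + T * I - c))
    have hcosh : cosh (π * T) ≤ 2 * ‖Complex.sin (π * (x + T * I - c))‖ ^ 2 := by
      refine (cosh_pi_mul_le_two_mul_sinh_sq hT).trans ?_
      rw [← sq_abs]
      gcongr
    have hcosh_pos := cosh_pos (π * T)
    rw [hF _ hne, norm_div, norm_pow, ← mul_div_assoc,
      div_le_div_iff₀ (by linarith) hcosh_pos]
    calc ‖G (x + T * I)‖ * cosh (π * T)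
        ≤ C * (1 + |T|) ^ m * (2 * ‖Complex.sin (π * (x + T * I - c))‖ ^ 2) :=
          mul_le_mul hGT hcosh hcosh_pos.le ((norm_nonneg _).trans hGT)
      _ = 2 * C * (1 + |T|) ^ m * ‖Complex.sin (π * (x + T * I - c))‖ ^ 2 := by ring
  have hlim := ((tendsto_one_add_abs_pow_div_cosh m).mono_left hl).const_mul (2 * C)
  rw [mul_zero] at hlim
  refine squeeze_zero_norm' ?_ hlim
  filter_upwards [(tendsto_comap.mono_left hl).eventually_ge_atTop 1] with T hT
  have hwidth : |c + 1 / 2 - (c - 1 / 2)| = 1 := by norm_num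
  simpa only [hwidth, mul_one] using
    intervalIntegral.norm_integral_le_of_norm_le_const (hbound T hT)

lemma continuous_comp_add_mul_I {e : ℝ} (hG : ContinuousOn G (unitStrip c))
    (he : |e - c| ≤ 1 / 2) : Continuous fun s : ℝ ↦ G (e + s * I) :=
  hG.comp_continuous (by fun_prop) fun s ↦ mem_unitStrip.2 (by simpa using he)

lemma integrable_comp_add_mul_I {e : ℝ} (hG : ContinuousOn G (unitStrip c)) {C : ℝ} {m : ℕ}
    (hC : ∀ w ∈ unitStrip c, ‖G w‖ ≤ C * (1 + |w.im|) ^ m) (he : |e - c| ≤ 1 / 2) :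
    Integrable (fun s : ℝ ↦ G (e + s * I)) logisticMeasure :=
  integrable_logisticMeasure_of_norm_le (continuous_comp_add_mul_I hG he) fun s ↦ by
    simpa using hC (e + s * I) (mem_unitStrip.2 (by simpa using he))

lemma div_sin_sq_pi_mul_eq_smul (g : ℂ) (s : ℝ) {u : ℂ}
    (hu : Complex.sin u ^ 2 = (cosh (π * s) : ℂ) ^ 2) :
    g / Complex.sin u ^ 2 = (2 / π : ℝ) • logisticDensity s • g := by
  have hcosh : (cosh (π * s) : ℂ) ≠ 0 := Complex.ofReal_ne_zero.2 (cosh_pos _).ne'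
  have hpi : (π : ℂ) ≠ 0 := Complex.ofReal_ne_zero.2 pi_ne_zero
  rw [hu, Complex.real_smul, Complex.real_smul, logisticDensity]
  push_cast at hcosh ⊢
  field_simp

lemma integral_add_half_eq_integral_sub_half_of_double_zero
    (hG : DifferentiableOn ℂ G (unitStrip c)) (hG0 : G c = 0) (hG1 : deriv G c = 0) {C : ℝ} {m : ℕ}
    (hC : ∀ w ∈ unitStrip c, ‖G w‖ ≤ C * (1 + |w.im|) ^ m) :
    ∫ s : ℝ, G ((c + 1 / 2 : ℝ) + s * I) ∂logisticMeasure =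
      ∫ s : ℝ, G ((c - 1 / 2 : ℝ) + s * I) ∂logisticMeasure := by
  obtain ⟨F, hF, hFeq⟩ := exists_differentiableOn_eq_div_sin_sq hG hG0 hG1
  have hright (s : ℝ) : F ((c + 1 / 2 : ℝ) + s * I) =
      (2 / π : ℝ) • logisticDensity s • G ((c + 1 / 2 : ℝ) + s * I) := by
    rw [hFeq _ fun h ↦ by simpa using congrArg Complex.re h]
    refine div_sin_sq_pi_mul_eq_smul _ s ?_
    rw [← sin_sq_pi_mul_half_add_mul_I]
    push_cast
    ring_nf
  have hleft (s : ℝ) : F ((c - 1 / 2 : ℝ) + s * I) =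
      (2 / π : ℝ) • logisticDensity s • G ((c - 1 / 2 : ℝ) + s * I) := by
    rw [hFeq _ fun h ↦ by simpa using congrArg Complex.re h]
    refine div_sin_sq_pi_mul_eq_smul _ s ?_
    rw [← sin_sq_pi_mul_neg_half_add_mul_I]
    push_cast
    ring_nf
  have hintegrable {e : ℝ} (he : |e - c| ≤ 1 / 2) :
      Integrable fun s : ℝ ↦ (2 / π : ℝ) • logisticDensity s • G (e + s * I) :=
    (integrable_logisticMeasure_iff.1
      (integrable_comp_add_mul_I hG.continuousOn hC he)).smul (2 / π)
  have hline := integral_vertical_line_eq (F := F) (a := c - 1 / 2) (b := c + 1 / 2)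
    (by rwa [Set.uIcc_of_le (by linarith)])
    (by simp_rw [hleft]; exact hintegrable (by norm_num))
    (by simp_rw [hright]; exact hintegrable (by norm_num))
    (tendsto_integral_horizontal_div_sin_sq tendsto_abs_atBot_atTop.le_comap hC hFeq)
    (tendsto_integral_horizontal_div_sin_sq tendsto_abs_atTop_atTop.le_comap hC hFeq)
  simp_rw [hleft, hright, integral_smul] at hline
  simp_rw [integral_logisticMeasure]
  exact smul_right_injective ℂ (by positivity : (2 / π : ℝ) ≠ 0) hline

lemma exists_norm_sub_linear_le {a b : ℂ} {C : ℝ} {m : ℕ}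
    (hC : ∀ w ∈ unitStrip c, ‖G w‖ ≤ C * (1 + |w.im|) ^ m) :
    ∃ C', ∀ w ∈ unitStrip c, ‖G w - a - b * (w - c)‖ ≤ C' * (1 + |w.im|) ^ (m + 1) := by
  refine ⟨C + ‖a‖ + ‖b‖, fun w hw ↦ ?_⟩
  have him : 1 ≤ 1 + |w.im| := le_add_of_nonneg_right (abs_nonneg _)
  have hpow : 1 + |w.im| ≤ (1 + |w.im|) ^ (m + 1) := le_self_pow₀ him m.succ_ne_zero
  have hsub := norm_sub_ofReal_le_of_mem_unitStrip hw
  have hG : ‖G w‖ ≤ C * (1 + |w.im|) ^ (m + 1) := by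
    rw [pow_succ, ← mul_assoc]
    exact (hC w hw).trans (le_mul_of_one_le_right ((norm_nonneg _).trans (hC w hw)) him)
  calc ‖G w - a - b * (w - c)‖ ≤ ‖G w‖ + ‖a‖ + ‖b‖ * ‖w - c‖ := by
        rw [← norm_mul]
        exact (norm_sub_le _ _).trans (by gcongr; exact norm_sub_le _ _)
    _ ≤ C * (1 + |w.im|) ^ (m + 1) + ‖a‖ * (1 + |w.im|) ^ (m + 1) +
        ‖b‖ * (1 + |w.im|) ^ (m + 1) := by
        gcongr
        · exact le_mul_of_one_le_right (norm_nonneg _) (him.trans hpow)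
        · exact hsub.trans hpow
    _ = (C + ‖a‖ + ‖b‖) * (1 + |w.im|) ^ (m + 1) := by ring

/- The linear part of `G` at `c` contributes `deriv G c`; after its removal, Cauchy's theorem
applies to `G w / sin (π * (w - c)) ^ 2` on the strip. -/
theorem integral_add_half_sub_integral_sub_half (hG : DifferentiableOn ℂ G (unitStrip c)) {C : ℝ}
    {m : ℕ} (hC : ∀ w ∈ unitStrip c, ‖G w‖ ≤ C * (1 + |w.im|) ^ m) :
    ∫ s : ℝ, G ((c + 1 / 2 : ℝ) + s * I) ∂logisticMeasure -
      ∫ s : ℝ, G ((c - 1 / 2 : ℝ) + s * I) ∂logisticMeasure = deriv G c := by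
  set R : ℂ → ℂ := fun w ↦ G w - G c - deriv G c * (w - c) with hR
  obtain ⟨C', hC'⟩ := exists_norm_sub_linear_le (a := G c) (b := deriv G c) hC
  have hRdiff : DifferentiableOn ℂ R (unitStrip c) := by fun_prop
  have hRderiv : deriv R c = 0 := by
    have hGderiv := (hG.differentiableAt (unitStrip_mem_nhds c)).hasDerivAt
    have := (hGderiv.sub_const (G c)).sub
      (((hasDerivAt_id (c : ℂ)).sub_const (c : ℂ)).const_mul (deriv G c))
    rw [mul_one, sub_self] at this
    exact this.deriv
  have hRint := integral_add_half_eq_integral_sub_half_of_double_zero hRdiff (by simp [hR])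
    hRderiv hC'
  have hint {H : ℂ → ℂ} (hH : ContinuousOn H (unitStrip c)) {D : ℝ} {n : ℕ}
      (hD : ∀ w ∈ unitStrip c, ‖H w‖ ≤ D * (1 + |w.im|) ^ n) :
      Integrable (fun s : ℝ ↦ H ((c + 1 / 2 : ℝ) + s * I)) logisticMeasure ∧
        Integrable (fun s : ℝ ↦ H ((c - 1 / 2 : ℝ) + s * I)) logisticMeasure :=
    ⟨integrable_comp_add_mul_I hH hD (by norm_num), integrable_comp_add_mul_I hH hD (by norm_num)⟩
  obtain ⟨hGright, hGleft⟩ := hint hG.continuousOn hC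
  obtain ⟨hRright, hRleft⟩ := hint hRdiff.continuousOn hC'
  have hdiff (s : ℝ) : G ((c + 1 / 2 : ℝ) + s * I) - G ((c - 1 / 2 : ℝ) + s * I) =
      R ((c + 1 / 2 : ℝ) + s * I) - R ((c - 1 / 2 : ℝ) + s * I) + deriv G c := by
    simp only [hR]
    push_cast
    ring
  rw [← integral_sub hGright hGleft]
  simp_rw [hdiff]
  have hRsub : Integrable (fun s : ℝ ↦ R ((c + 1 / 2 : ℝ) + s * I) -
      R ((c - 1 / 2 : ℝ) + s * I)) logisticMeasure := hRright.sub hRleft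
  rw [integral_add hRsub (integrable_const _), integral_sub hRright hRleft, hRint,
    sub_self, zero_add, integral_const, probReal_univ, one_smul]

end ContourShift

section BernoulliMoments

lemma bernPoly_eq_aeval (n : ℕ) (f : ℝ) :
    bernPoly n f = Polynomial.aeval f (Polynomial.bernoulli n) := by
  simp only [bernPoly, Polynomial.bernoulli, map_sum, Polynomial.aeval_monomial, map_mul,
    eq_ratCast, map_natCast]
  exact Finset.sum_congr rfl fun k _ ↦ by ring

lemma sum_choose_mul_bernPoly (n : ℕ) (f : ℝ) :
    ∑ k ∈ Finset.range (n + 1), ((n + 1).choose k : ℝ) * bernPoly k f = (n + 1) * f ^ n := by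
  have hsum := congrArg (Polynomial.aeval f) (Polynomial.sum_bernoulli n)
  simpa [bernPoly_eq_aeval, Polynomial.aeval_monomial, Algebra.smul_def, add_mul] using hsum

/-- The complex random variable `f - 1 / 2 - i * S`, for `S` of law `logisticMeasure`; its moments
are the values at `f` of the Bernoulli polynomials. -/
noncomputable def bernoulliVar (f s : ℝ) : ℂ := (f - 1 / 2 : ℝ) - s * I

variable (f s : ℝ)

@[simp]
lemma bernoulliVar_re : (bernoulliVar f s).re = f - 1 / 2 := by simp [bernoulliVar]

@[simp]
lemma bernoulliVar_im : (bernoulliVar f s).im = -s := by simp [bernoulliVar]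

@[fun_prop]
lemma continuous_bernoulliVar : Continuous (bernoulliVar f) := by
  unfold bernoulliVar
  fun_prop

lemma norm_ofReal_sub_le {w : ℂ} (hw : |w.re| ≤ 1 / 2) :
    ‖f - w‖ ≤ (|f| + 1) * (1 + |w.im|) := by
  have hnorm : ‖f - w‖ ≤ |f| + (|w.re| + |w.im|) := by
    refine (norm_sub_le _ _).trans ?_
    rw [Complex.norm_real, norm_eq_abs]
    gcongr
    exact Complex.norm_le_abs_re_add_abs_im w
  nlinarith [abs_nonneg f, abs_nonneg w.im]

lemma bernoulliVar_eq_sub : bernoulliVar f s = f - ((1 / 2 : ℝ) + s * I) := by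
  unfold bernoulliVar
  push_cast
  ring

lemma norm_bernoulliVar_pow_le (n : ℕ) :
    ‖bernoulliVar f s‖ ^ n ≤ (|f| + 1) ^ n * (1 + |s|) ^ n := by
  rw [← mul_pow, bernoulliVar_eq_sub]
  gcongr
  simpa using norm_ofReal_sub_le f (w := (1 / 2 : ℝ) + s * I) (by simp [abs_of_pos])

lemma integrable_bernoulliVar_pow (n : ℕ) :
    Integrable (fun s ↦ bernoulliVar f s ^ n) logisticMeasure :=
  integrable_logisticMeasure_of_norm_le (by fun_prop) fun s ↦ by
    rw [norm_pow]
    exact norm_bernoulliVar_pow_le f s n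

lemma integral_bernoulliVar_add_one_pow_sub (n : ℕ) :
    ∫ s, (bernoulliVar f s + 1) ^ n ∂logisticMeasure - ∫ s, bernoulliVar f s ^ n ∂logisticMeasure =
      n * f ^ (n - 1) := by
  have hgrowth (w : ℂ) (hw : w ∈ unitStrip 0) :
      ‖(f - w) ^ n‖ ≤ (|f| + 1) ^ n * (1 + |w.im|) ^ n := by
    rw [norm_pow, ← mul_pow]
    gcongr
    exact norm_ofReal_sub_le f (by simpa using mem_unitStrip.1 hw)
  have hshift := integral_add_half_sub_integral_sub_half (G := fun w ↦ (f - w) ^ n) (c := 0)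
    (by fun_prop) hgrowth
  have hderiv : HasDerivAt (fun w : ℂ ↦ (f - w) ^ n) (-(n * f ^ (n - 1))) 0 := by
    refine (((hasDerivAt_id (0 : ℂ)).const_sub (f : ℂ)).pow n).congr_deriv ?_
    simp
  rw [Complex.ofReal_zero, hderiv.deriv] at hshift
  rw [← neg_sub, neg_eq_iff_eq_neg, ← hshift]
  congr 2 with s <;> rw [bernoulliVar_eq_sub] <;> push_cast <;> ring_nf

lemma sum_choose_mul_integral_bernoulliVar_pow (n : ℕ) :
    ∑ k ∈ Finset.range (n + 1), ((n + 1).choose k : ℂ) *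
      ∫ s, bernoulliVar f s ^ k ∂logisticMeasure = (n + 1) * f ^ n := by
  have hint (k : ℕ) : Integrable (fun s ↦ ((n + 1).choose k : ℂ) * bernoulliVar f s ^ k)
      logisticMeasure := (integrable_bernoulliVar_pow f k).const_mul _
  have hdiff := integral_bernoulliVar_add_one_pow_sub f (n + 1)
  simp_rw [add_pow, one_pow, mul_one, mul_comm (_ ^ _)] at hdiff
  rw [integral_finsetSum _ fun k _ ↦ hint k, Finset.sum_range_succ] at hdiff
  simp_rw [integral_const_mul] at hdiff
  simpa using hdiff

theorem integral_bernoulliVar_pow (n : ℕ) :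
    ∫ s, bernoulliVar f s ^ n ∂logisticMeasure = bernPoly n f := by
  induction n using Nat.strong_induction_on with
  | _ n ih =>
    have hbern := congrArg Complex.ofReal (sum_choose_mul_bernPoly n f)
    push_cast at hbern
    have hsum := (sum_choose_mul_integral_bernoulliVar_pow f n).trans hbern.symm
    rw [Finset.sum_range_succ, Finset.sum_range_succ,
      Finset.sum_congr rfl fun k hk ↦ by rw [ih k (Finset.mem_range.1 hk)], add_right_inj] at hsum
    exact mul_left_cancel₀ (Nat.cast_ne_zero.2 (Nat.choose_pos n.le_succ).ne') hsum

end BernoulliMoments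

section LogPrimitive

/-- The primitive `w * log w - w` of the principal logarithm on the right half-plane. -/
noncomputable def logPrimitive (w : ℂ) : ℂ := w * Complex.log w - w

lemma hasDerivAt_logPrimitive {w : ℂ} (hw : 0 < w.re) :
    HasDerivAt logPrimitive (Complex.log w) w := by
  have hw0 : w ≠ 0 := fun h ↦ by simp [h] at hw
  refine (((hasDerivAt_id w).mul (Complex.hasDerivAt_log (Or.inl hw))).sub
    (hasDerivAt_id w)).congr_deriv ?_
  simp [hw0]

lemma re_ofReal_mul_le_max {t : ℝ} (ht0 : 0 ≤ t) (ht1 : t ≤ 1) (z : ℂ) :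
    (t * z).re ≤ max 0 z.re := by
  rw [Complex.re_ofReal_mul]
  rcases le_total z.re 0 with hz | hz
  · exact le_max_of_le_left (mul_nonpos_of_nonneg_of_nonpos ht0 hz)
  · exact le_max_of_le_right (mul_le_of_le_one_left hz ht1)

lemma sub_max_le_re_sub_mul {t : ℝ} (ht0 : 0 ≤ t) (ht1 : t ≤ 1) (x : ℝ) (z : ℂ) :
    x - max 0 z.re ≤ (x - t * z).re := by
  rw [Complex.sub_re, Complex.ofReal_re]
  linarith [re_ofReal_mul_le_max ht0 ht1 z]

lemma sub_mul_ne_zero {t : ℝ} (ht0 : 0 ≤ t) (ht1 : t ≤ 1) {x : ℝ} {z : ℂ}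
    (hx : max 0 z.re < x) : (x - t * z : ℂ) ≠ 0 := fun h ↦ by
  have hre := sub_max_le_re_sub_mul ht0 ht1 x z
  rw [h, Complex.zero_re] at hre
  linarith

lemma sq_mul_integral_one_sub_div_sub_mul {x : ℝ} {z : ℂ} (hx : max 0 z.re < x) :
    z ^ 2 * ∫ t in (0 : ℝ)..1, (1 - t : ℂ) / (x - t * z) =
      logPrimitive (x - z) - logPrimitive x + z * Complex.log x := by
  have hderiv (t : ℝ) (ht : t ∈ Set.uIcc 0 1) :
      HasDerivAt (fun t : ℝ ↦ logPrimitive (x - t * z) - (1 - t) * z * Complex.log (x - t * z))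
        (z ^ 2 * ((1 - t) / (x - t * z))) t := by
    rw [Set.uIcc_of_le zero_le_one] at ht
    have hre : 0 < (x - t * z : ℂ).re :=
      (sub_pos.2 hx).trans_le (sub_max_le_re_sub_mul ht.1 ht.2 x z)
    have hne := sub_mul_ne_zero ht.1 ht.2 hx
    have hid : HasDerivAt (fun t : ℝ ↦ (t : ℂ)) 1 t := Complex.ofRealCLM.hasDerivAt
    have hlin : HasDerivAt (fun t : ℝ ↦ (x - t * z : ℂ)) (-(1 * z)) t :=
      (hid.mul_const z).const_sub _
    refine (((hasDerivAt_logPrimitive hre).comp t hlin).sub (((hid.const_sub 1).mul_const z).mul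
      ((Complex.hasDerivAt_log (Or.inl hre)).comp t hlin))).congr_deriv ?_
    simp only [Function.comp_apply]
    field_simp
    ring
  have hcont : ContinuousOn (fun t : ℝ ↦ z ^ 2 * ((1 - t : ℂ) / (x - t * z))) (Set.uIcc 0 1) := by
    rw [Set.uIcc_of_le zero_le_one]
    exact continuousOn_const.mul (ContinuousOn.div (by fun_prop) (by fun_prop)
      fun t ht ↦ sub_mul_ne_zero ht.1 ht.2 hx)
  rw [← intervalIntegral.integral_const_mul,
    intervalIntegral.integral_eq_sub_of_hasDerivAt hderiv hcont.intervalIntegrable]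
  simp only [Complex.ofReal_one, Complex.ofReal_zero, one_mul, zero_mul, sub_self, sub_zero]
  ring

lemma norm_one_sub_div_sub_mul_le {t : ℝ} (ht0 : 0 ≤ t) (ht1 : t ≤ 1) {x : ℝ} {z : ℂ}
    (hx : max 0 z.re < x) : ‖(1 - t : ℂ) / (x - t * z)‖ ≤ 1 / (x - max 0 z.re) := by
  have hnum : ‖(1 - t : ℂ)‖ ≤ 1 := by
    rw [← Complex.ofReal_one, ← Complex.ofReal_sub, Complex.norm_real, norm_eq_abs, abs_le]
    constructor <;> linarith
  have := sub_pos.2 hx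
  rw [norm_div]
  gcongr
  exact (sub_max_le_re_sub_mul ht0 ht1 x z).trans (Complex.re_le_norm _)

lemma norm_logPrimitive_sub_le {x : ℝ} {z : ℂ} (hx : max 0 z.re < x) :
    ‖logPrimitive (x - z)‖ ≤
      ‖logPrimitive x‖ + ‖z‖ * ‖Complex.log x‖ + ‖z‖ ^ 2 / (x - max 0 z.re) := by
  have hint : ‖∫ t in (0 : ℝ)..1, (1 - t : ℂ) / (x - t * z)‖ ≤ 1 / (x - max 0 z.re) := by
    have hle := intervalIntegral.norm_integral_le_of_norm_le_const (a := 0) (b := 1)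
      (f := fun t : ℝ ↦ (1 - t : ℂ) / (x - t * z)) (C := 1 / (x - max 0 z.re)) fun t ht ↦ by
        rw [Set.uIoc_of_le zero_le_one] at ht
        exact norm_one_sub_div_sub_mul_le ht.1.le ht.2 hx
    rwa [sub_zero, abs_one, mul_one] at hle
  have htaylor : logPrimitive (x - z) = logPrimitive x - z * Complex.log x +
      z ^ 2 * ∫ t in (0 : ℝ)..1, (1 - t : ℂ) / (x - t * z) := by
    rw [sq_mul_integral_one_sub_div_sub_mul hx]
    ring
  rw [htaylor, div_eq_mul_one_div, ← norm_mul, ← norm_pow]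
  refine (norm_add_le _ _).trans (add_le_add (norm_sub_le _ _) ?_)
  rw [norm_mul]
  gcongr

lemma norm_logPrimitive_le_of_mem_unitStrip {c : ℝ} (hc : 1 / 2 < c) {w : ℂ}
    (hw : w ∈ unitStrip c) :
    ‖logPrimitive w‖ ≤
      (‖logPrimitive c‖ + ‖Complex.log c‖ + 1 / (c - 1 / 2)) * (1 + |w.im|) ^ 2 := by
  have hsub : ‖c - w‖ ≤ 1 + |w.im| := by
    rw [norm_sub_rev]
    exact norm_sub_ofReal_le_of_mem_unitStrip hw
  have him : 1 ≤ 1 + |w.im| := le_add_of_nonneg_right (abs_nonneg _)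
  have hmax : max 0 (c - w).re ≤ 1 / 2 := by
    rw [Complex.sub_re, Complex.ofReal_re]
    exact max_le (by norm_num) (by linarith [abs_le.1 (mem_unitStrip.1 hw)])
  have hbound := norm_logPrimitive_sub_le (hmax.trans_lt hc)
  rw [sub_sub_cancel] at hbound
  have := sub_pos.2 hc
  calc ‖logPrimitive w‖
      ≤ ‖logPrimitive c‖ + ‖c - w‖ * ‖Complex.log c‖ + ‖c - w‖ ^ 2 / (c - max 0 (c - w).re) :=
        hbound
    _ ≤ ‖logPrimitive c‖ * (1 + |w.im|) ^ 2 + (1 + |w.im|) ^ 2 * ‖Complex.log c‖ +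
        (1 + |w.im|) ^ 2 / (c - 1 / 2) := by
        gcongr
        · exact le_mul_of_one_le_right (norm_nonneg _) (one_le_pow₀ him)
        · exact hsub.trans (le_self_pow₀ him two_ne_zero)
    _ = (‖logPrimitive c‖ + ‖Complex.log c‖ + 1 / (c - 1 / 2)) * (1 + |w.im|) ^ 2 := by ring

lemma differentiableOn_logPrimitive_unitStrip {c : ℝ} (hc : 1 / 2 < c) :
    DifferentiableOn ℂ logPrimitive (unitStrip c) := fun w hw ↦ by
  have hre : 0 < w.re := by linarith [abs_le.1 (mem_unitStrip.1 hw)]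
  exact (hasDerivAt_logPrimitive hre).differentiableAt.differentiableWithinAt

/-- The expectation of `logPrimitive (u + 1 / 2 + i * S)`, for `S` of law `logisticMeasure`. It
equals `log (Γ (u + 1)) - log (2 * π) / 2`, of which only the case of natural `u` is proved. -/
noncomputable def logFactorialMean (u : ℝ) : ℂ :=
  ∫ s : ℝ, logPrimitive ((u + 1 / 2 : ℝ) + s * I) ∂logisticMeasure

lemma integrable_logPrimitive_add_mul_I {u : ℝ} (hu : -1 / 2 < u) :
    Integrable (fun s : ℝ ↦ logPrimitive ((u + 1 / 2 : ℝ) + s * I)) logisticMeasure := by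
  have hc : 1 / 2 < u + 1 := by linarith
  refine integrable_comp_add_mul_I (differentiableOn_logPrimitive_unitStrip hc).continuousOn
    (fun w ↦ norm_logPrimitive_le_of_mem_unitStrip hc) ?_
  norm_num [abs_le]

lemma logFactorialMean_add_one {u : ℝ} (hu : -1 / 2 < u) :
    logFactorialMean (u + 1) = logFactorialMean u + log (u + 1) := by
  have hc : 1 / 2 < u + 1 := by linarith
  have hshift := integral_add_half_sub_integral_sub_half
    (differentiableOn_logPrimitive_unitStrip hc) fun w ↦ norm_logPrimitive_le_of_mem_unitStrip hc
  have hhalf : u + 1 - 1 / 2 = u + 1 / 2 := by ring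
  rw [(hasDerivAt_logPrimitive (by rw [Complex.ofReal_re]; linarith)).deriv, hhalf,
    ← Complex.ofReal_log (by linarith)] at hshift
  exact sub_eq_iff_eq_add'.1 hshift

lemma log_factorial_eq_sum (n : ℕ) : log n.factorial = ∑ k ∈ Finset.Icc 1 n, log k := by
  rw [← Finset.Ico_add_one_right_eq_Icc, ← Finset.prod_Ico_id_eq_factorial, Nat.cast_prod, log_prod]
  exact fun k hk ↦ Nat.cast_ne_zero.2 (Nat.one_le_iff_ne_zero.1 (Finset.mem_Ico.1 hk).1)

lemma logFactorialMean_natCast_eq_add (n : ℕ) :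
    logFactorialMean n = logFactorialMean 0 + log n.factorial := by
  induction n with
  | zero => simp
  | succ n ih =>
    have hn : (-1 / 2 : ℝ) < n := by linarith [n.cast_nonneg (α := ℝ)]
    rw [Nat.cast_succ, logFactorialMean_add_one hn, ih, Nat.factorial_succ, Nat.cast_mul,
      log_mul (by positivity) (by positivity)]
    push_cast
    ring

end LogPrimitive

section Remainder

/-- The joint law of independent `S` of law `logisticMeasure` and `T` uniform on `(0, 1]`. -/
noncomputable def logisticUniformMeasure : Measure (ℝ × ℝ) :=
  logisticMeasure.prod (volume.restrict (Set.Ioc 0 1))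

lemma ae_snd_mem_Ioc : ∀ᵐ p ∂logisticUniformMeasure, p.2 ∈ Set.Ioc (0 : ℝ) 1 :=
  Measure.quasiMeasurePreserving_snd.ae (ae_restrict_mem measurableSet_Ioc)

lemma integral_pow_mul_one_sub (n : ℕ) :
    ∫ t in Set.Ioc (0 : ℝ) 1, (t : ℂ) ^ n * (1 - t) = 1 / ((n + 1) * (n + 2)) := by
  have hint (m : ℕ) : IntervalIntegrable (fun t : ℝ ↦ (t : ℂ) ^ m) volume 0 1 :=
    (by fun_prop : Continuous fun t : ℝ ↦ (t : ℂ) ^ m).intervalIntegrable _ _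
  have hpow (m : ℕ) : ∫ t in (0 : ℝ)..1, (t : ℂ) ^ m = 1 / (m + 1) := by
    simp only [← Complex.ofReal_pow, intervalIntegral.integral_ofReal, integral_pow]
    simp
  have hsplit (t : ℝ) : (t : ℂ) ^ n * (1 - t) = (t : ℂ) ^ n - (t : ℂ) ^ (n + 1) := by ring
  rw [← intervalIntegral.integral_of_le zero_le_one]
  simp only [hsplit]
  rw [intervalIntegral.integral_sub (hint n) (hint (n + 1)), hpow, hpow]
  have hsucc : (n + 1 : ℂ) ≠ 0 := n.cast_add_one_ne_zero
  have hsucc_succ : (n + 2 : ℂ) ≠ 0 := by exact_mod_cast (n + 1).succ_ne_zero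
  rw [Nat.cast_add_one, add_assoc (n : ℂ), one_add_one_eq_two]
  field_simp
  ring

lemma integrableOn_pow_mul_one_sub (n : ℕ) :
    IntegrableOn (fun t : ℝ ↦ (t : ℂ) ^ n * (1 - t)) (Set.Ioc 0 1) :=
  (by fun_prop : Continuous fun t : ℝ ↦ (t : ℂ) ^ n * (1 - t)).integrableOn_Ioc

/-- The numerator `Z ^ (a + 2) * T ^ a * (1 - T)`, with `Z = bernoulliVar f S`, of the integral
remainder of order `a` in the expansion of `logPrimitive (x - Z)`. -/
noncomputable def remainderWeight (f : ℝ) (a : ℕ) (p : ℝ × ℝ) : ℂ :=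
  bernoulliVar f p.1 ^ (a + 2) * ((p.2 : ℂ) ^ a * (1 - p.2))

/-- The remainder `E[remainderWeight f a / (x - T * Z)]` of the Stirling expansion at `x` after its
`a`-th term, with `Z = bernoulliVar f S`. -/
noncomputable def stirlingRemainder (x f : ℝ) (a : ℕ) : ℂ :=
  ∫ p, remainderWeight f a p / (x - p.2 * bernoulliVar f p.1) ∂logisticUniformMeasure

variable (f : ℝ) (a : ℕ)

@[fun_prop]
lemma continuous_remainderWeight : Continuous (remainderWeight f a) := by
  unfold remainderWeight
  fun_prop

lemma remainderWeight_add (l : ℕ) (p : ℝ × ℝ) :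
    remainderWeight f (a + l) p = remainderWeight f a p * (p.2 * bernoulliVar f p.1) ^ l := by
  unfold remainderWeight
  ring

lemma integrable_remainderWeight : Integrable (remainderWeight f a) logisticUniformMeasure :=
  (integrable_bernoulliVar_pow f (a + 2)).mul_prod (integrableOn_pow_mul_one_sub a)

lemma integral_remainderWeight :
    ∫ p, remainderWeight f a p ∂logisticUniformMeasure =
      bernPoly (a + 2) f / ((a + 1) * (a + 2)) := by
  unfold remainderWeight logisticUniformMeasure
  rw [integral_prod_mul (fun s ↦ bernoulliVar f s ^ (a + 2)) fun t : ℝ ↦ (t : ℂ) ^ a * (1 - t),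
    integral_bernoulliVar_pow, integral_pow_mul_one_sub, mul_one_div]

variable {f} {x : ℝ} (hx : max 0 (f - 1 / 2) < x)
include hx

lemma norm_remainderWeight_div_le {p : ℝ × ℝ} (hp : p.2 ∈ Set.Ioc (0 : ℝ) 1) :
    ‖remainderWeight f a p / (x - p.2 * bernoulliVar f p.1)‖ ≤
      ‖remainderWeight f a p‖ / (x - max 0 (f - 1 / 2)) := by
  have := sub_pos.2 hx
  have hre := sub_max_le_re_sub_mul hp.1.le hp.2 x (bernoulliVar f p.1)
  rw [bernoulliVar_re] at hre
  rw [norm_div]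
  gcongr
  exact hre.trans (Complex.re_le_norm _)

lemma integrable_remainderWeight_div :
    Integrable (fun p ↦ remainderWeight f a p / (x - p.2 * bernoulliVar f p.1))
      logisticUniformMeasure := by
  refine ((integrable_remainderWeight f a).norm.div_const (x - max 0 (f - 1 / 2))).mono' ?_
    (ae_snd_mem_Ioc.mono fun p ↦ norm_remainderWeight_div_le a hx)
  exact Measurable.aestronglyMeasurable (by fun_prop)

lemma norm_stirlingRemainder_le :
    ‖stirlingRemainder x f a‖ ≤
      (∫ p, ‖remainderWeight f a p‖ ∂logisticUniformMeasure) / (x - max 0 (f - 1 / 2)) := by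
  rw [← integral_div]
  exact norm_integral_le_of_norm_le ((integrable_remainderWeight f a).norm.div_const _)
    (ae_snd_mem_Ioc.mono fun p ↦ norm_remainderWeight_div_le a hx)

lemma stirlingRemainder_eq_add :
    stirlingRemainder x f a =
      bernPoly (a + 2) f / ((a + 1) * (a + 2)) / x + stirlingRemainder x f (a + 1) / x := by
  have hx0 : (x : ℂ) ≠ 0 := Complex.ofReal_ne_zero.2 ((le_max_left _ _).trans_lt hx).ne'
  rw [← integral_remainderWeight, stirlingRemainder, stirlingRemainder, ← integral_div,
    ← integral_div, ← integral_add ((integrable_remainderWeight f a).div_const _)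
      ((integrable_remainderWeight_div (a + 1) hx).div_const _)]
  refine integral_congr_ae ?_
  filter_upwards [ae_snd_mem_Ioc] with p hp
  have hne := sub_mul_ne_zero hp.1.le hp.2 (x := x) (z := bernoulliVar f p.1)
    (by rwa [bernoulliVar_re])
  rw [remainderWeight_add, pow_one]
  field_simp
  ring

lemma stirlingRemainder_zero_eq_sum_add :
    stirlingRemainder x f 0 =
      ∑ k ∈ Finset.Icc 1 a, (bernPoly (k + 1) f / (k * (k + 1) * x ^ k) : ℂ) +
        1 / x ^ a * stirlingRemainder x f a := by
  induction a with
  | zero => simp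
  | succ a ih =>
    rw [ih, Finset.sum_Icc_succ_top (by lia), stirlingRemainder_eq_add a hx]
    push_cast
    have hsucc : (a + 1 + 1 : ℂ) = a + 2 := by ring
    rw [hsucc]
    simp only [div_eq_mul_inv, mul_inv, pow_succ]
    ring

lemma stirlingRemainder_zero :
    stirlingRemainder x f 0 =
      logFactorialMean (x - f) - logPrimitive x + bernPoly 1 f * log x := by
  have hx0 : 0 < x := (le_max_left _ _).trans_lt hx
  have hu : -1 / 2 < x - f := by linarith [(le_max_right _ _).trans_lt hx]
  have hsub (s : ℝ) : x - bernoulliVar f s = (x - f + 1 / 2 : ℝ) + s * I := by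
    rw [bernoulliVar_eq_sub]
    push_cast
    ring
  have hinner (s : ℝ) : ∫ t in Set.Ioc (0 : ℝ) 1,
      remainderWeight f 0 (s, t) / (x - t * bernoulliVar f s) =
        logPrimitive ((x - f + 1 / 2 : ℝ) + s * I) - logPrimitive x +
          bernoulliVar f s ^ 1 * log x := by
    rw [pow_one, Complex.ofReal_log hx0.le, ← hsub,
      ← sq_mul_integral_one_sub_div_sub_mul (by rwa [bernoulliVar_re]),
      intervalIntegral.integral_of_le zero_le_one, ← integral_const_mul]
    simp only [remainderWeight, zero_add, pow_zero, one_mul, mul_div_assoc]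
  have hint := integrable_logPrimitive_add_mul_I hu
  rw [stirlingRemainder, logisticUniformMeasure,
    integral_prod _ (integrable_remainderWeight_div 0 hx)]
  simp only [hinner]
  rw [integral_add (hint.sub' (integrable_const _)) ((integrable_bernoulliVar_pow f 1).mul_const _),
    integral_sub hint (integrable_const _), integral_mul_const, integral_bernoulliVar_pow,
    integral_const, probReal_univ, one_smul, logFactorialMean]

end Remainder

section StirlingConstant

lemma tendsto_stirlingRemainder_natCast :
    Tendsto (fun n : ℕ ↦ stirlingRemainder n 0 0) atTop (𝓝 0) := by
  have hbound : Tendsto (fun n : ℕ ↦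
      (∫ p, ‖remainderWeight 0 0 p‖ ∂logisticUniformMeasure) / (n - max 0 (0 - 1 / 2))) atTop
      (𝓝 0) :=
    Tendsto.const_div_atTop (tendsto_atTop_add_const_right _ _ tendsto_natCast_atTop_atTop) _
  refine squeeze_zero_norm' ?_ hbound
  filter_upwards [eventually_gt_atTop 0] with n hn
  exact norm_stirlingRemainder_le 0 (max_lt (by simpa) (by linarith [n.cast_nonneg (α := ℝ)]))

lemma tendsto_log_factorial_sub :
    Tendsto (fun n : ℕ ↦ log n.factorial - (n * log n - n + 1 / 2 * log n)) atTop
      (𝓝 (1 / 2 * log (2 * π))) := by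
  have hlim := ((continuousAt_log (by positivity : √π ≠ 0)).tendsto.comp
    Stirling.tendsto_stirlingSeq_sqrt_pi).add_const (1 / 2 * log 2)
  have hconst : log √π + 1 / 2 * log 2 = 1 / 2 * log (2 * π) := by
    rw [log_sqrt pi_pos.le, log_mul two_ne_zero pi_ne_zero]
    ring
  rw [hconst] at hlim
  refine hlim.congr' ?_
  filter_upwards [eventually_ne_atTop 0] with n hn
  have hn' : (n : ℝ) ≠ 0 := Nat.cast_ne_zero.2 hn
  rw [Function.comp_apply, Stirling.log_stirlingSeq_formula, log_mul two_ne_zero hn',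
    log_div hn' (exp_ne_zero _), log_exp]
  ring

lemma logFactorialMean_zero : logFactorialMean 0 = (-(1 / 2 * log (2 * π)) : ℝ) := by
  have hlim := tendsto_stirlingRemainder_natCast.sub
    ((Complex.continuous_ofReal.tendsto _).comp tendsto_log_factorial_sub)
  have hbern : bernPoly 1 0 = -1 / 2 := by simp [bernPoly, Finset.sum_range_succ]
  have heq : ∀ᶠ n : ℕ in atTop, stirlingRemainder n 0 0 -
      (log n.factorial - (n * log n - n + 1 / 2 * log n) : ℝ) = logFactorialMean 0 := by
    filter_upwards [eventually_gt_atTop 0] with n hn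
    have hn' : (0 : ℝ) < n := Nat.cast_pos.2 hn
    rw [stirlingRemainder_zero (max_lt hn' (by linarith)), sub_zero,
      logFactorialMean_natCast_eq_add, logPrimitive, hbern, ← Complex.ofReal_log hn'.le]
    push_cast
    ring
  rw [tendsto_nhds_unique (tendsto_const_nhds.congr' (heq.mono fun n h ↦ h.symm)) hlim]
  simp

lemma logFactorialMean_natCast (n : ℕ) :
    logFactorialMean n = (log n.factorial - 1 / 2 * log (2 * π) : ℝ) := by
  rw [logFactorialMean_natCast_eq_add, logFactorialMean_zero]
  push_cast
  ring

end StirlingConstant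

section InverseFactorialSeries

lemma stirling1Unsigned_eq_stirlingFirst (k l : ℕ) :
    stirling1Unsigned k l = Nat.stirlingFirst k l := by
  induction k generalizing l with
  | zero => cases l <;> rfl
  | succ k ih =>
    cases l with
    | zero =>
      rw [stirling1Unsigned, ih]
      cases k <;> simp
    | succ l => rw [stirling1Unsigned, ih, ih, Nat.stirlingFirst_succ_succ, add_comm]

lemma sum_stirlingFirst_succ_mul_pow {R : Type*} [CommSemiring R] (y : R) (k : ℕ) :
    ∑ l ∈ Finset.range (k + 1), (Nat.stirlingFirst (k + 1) (l + 1) : R) * y ^ l =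
      ∏ i ∈ Finset.range k, (y + i + 1) := by
  induction k with
  | zero => simp [Nat.stirlingFirst_self]
  | succ k ih =>
    have hrec (l : ℕ) : (Nat.stirlingFirst (k + 2) (l + 1) : R) * y ^ l =
        (k + 1) * ((Nat.stirlingFirst (k + 1) (l + 1) : R) * y ^ l) +
          (Nat.stirlingFirst (k + 1) l : R) * y ^ l := by
      rw [Nat.stirlingFirst_succ_succ]
      push_cast
      ring
    have hleft : ∑ l ∈ Finset.range (k + 2), (Nat.stirlingFirst (k + 1) l : R) * y ^ l =
        y * ∏ i ∈ Finset.range k, (y + i + 1) := by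
      rw [Finset.sum_range_succ', Nat.stirlingFirst_succ_zero, Nat.cast_zero, zero_mul, add_zero,
        ← ih, Finset.mul_sum]
      exact Finset.sum_congr rfl fun l _ ↦ by ring
    have hright : ∑ l ∈ Finset.range (k + 2), (Nat.stirlingFirst (k + 1) (l + 1) : R) * y ^ l =
        ∏ i ∈ Finset.range k, (y + i + 1) := by
      rw [Finset.sum_range_succ, Nat.stirlingFirst_eq_zero_of_lt (by lia), Nat.cast_zero,
        zero_mul, add_zero, ih]
    rw [Finset.sum_congr rfl fun l _ ↦ hrec l, Finset.sum_add_distrib, ← Finset.mul_sum, hleft,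
      hright, Finset.prod_range_succ]
    ring

lemma risingProd_eq_sum (y : ℂ) (k : ℕ) :
    risingProd y k =
      ∑ l ∈ Finset.range (k + 1), (stirling1Unsigned (k + 1) (l + 1) : ℂ) * y ^ l := by
  simp only [stirling1Unsigned_eq_stirlingFirst, sum_stirlingFirst_succ_mul_pow, risingProd]

lemma risingProdR_pos {x : ℝ} (hx : 0 ≤ x) (k : ℕ) : 0 < risingProdR x k :=
  Finset.prod_pos fun i _ ↦ by positivity

lemma ofReal_risingProdR (x : ℝ) (k : ℕ) : (risingProdR x k : ℂ) = risingProd x k := by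
  simp [risingProdR, risingProd]

lemma sum_prod_div_prod {K : Type*} [Field K] {x y : K} (hxy : x ≠ y)
    (hx : ∀ i : ℕ, x + i + 1 ≠ 0) (n : ℕ) :
    ∑ k ∈ Finset.range n,
        (∏ i ∈ Finset.range k, (y + i + 1)) / ∏ i ∈ Finset.range (k + 1), (x + i + 1) =
      (1 - (∏ i ∈ Finset.range n, (y + i + 1)) / ∏ i ∈ Finset.range n, (x + i + 1)) /
        (x - y) := by
  have hsub : x - y ≠ 0 := sub_ne_zero.2 hxy
  induction n with
  | zero => simp
  | succ n ih =>
    have hprod : ∏ i ∈ Finset.range n, (x + i + 1) ≠ 0 := Finset.prod_ne_zero_iff.2 fun i _ ↦ hx i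
    have hn := hx n
    rw [Finset.sum_range_succ, ih, Finset.prod_range_succ, Finset.prod_range_succ]
    field_simp
    ring

lemma sinh_le_mul_cosh {u : ℝ} (hu : 0 ≤ u) : sinh u ≤ u * cosh u := by
  have hslope := (convex_Icc 0 u).image_sub_le_mul_sub_of_deriv_le continuous_sinh.continuousOn
    differentiable_sinh.differentiableOn (C := cosh u) (fun v hv ↦ ?_) 0 (Set.left_mem_Icc.2 hu) u
    (Set.right_mem_Icc.2 hu) hu
  · rwa [sinh_zero, sub_zero, sub_zero, mul_comm] at hslope
  · rw [interior_Icc] at hv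
    rw [Real.deriv_sinh, cosh_le_cosh, abs_of_pos hv.1, abs_of_nonneg hu]
    exact hv.2.le

lemma tendsto_euler_sinh_prod (s : ℝ) :
    Tendsto (fun n : ℕ ↦ π * s * ∏ i ∈ Finset.range n, (1 + s ^ 2 / ((i : ℝ) + 1) ^ 2)) atTop
      (𝓝 (sinh (π * s))) := by
  have hsin : (Complex.sin (π * (s * I))).im = sinh (π * s) := by
    rw [← mul_assoc, Complex.sin_mul_I, ← Complex.ofReal_mul, ← Complex.ofReal_sinh,
      Complex.im_ofReal_mul, Complex.I_im, mul_one]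
  have hlim := (Complex.continuous_im.tendsto _).comp (Complex.tendsto_euler_sin_prod (s * I))
  rw [hsin] at hlim
  refine hlim.congr fun n ↦ ?_
  have hreal : π * (s * I) * ∏ j ∈ Finset.range n, (1 - (s * I) ^ 2 / ((j : ℂ) + 1) ^ 2) =
      (π * s * ∏ i ∈ Finset.range n, (1 + s ^ 2 / ((i : ℝ) + 1) ^ 2) : ℝ) * I := by
    simp only [mul_pow, Complex.I_sq]
    push_cast
    simp only [mul_neg, mul_one, neg_div, sub_neg_eq_add]
    ring
  rw [Function.comp_apply, hreal, Complex.im_ofReal_mul, Complex.I_im, mul_one]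

lemma prod_one_add_sq_div_le_cosh (s : ℝ) (k : ℕ) :
    ∏ i ∈ Finset.range k, (1 + s ^ 2 / ((i : ℝ) + 1) ^ 2) ≤ cosh (π * s) := by
  wlog hs : 0 ≤ s generalizing s
  · simpa using this (-s) (by linarith)
  rcases hs.eq_or_lt with rfl | hpos
  · simp
  have hmono : Monotone fun n : ℕ ↦
      π * s * ∏ i ∈ Finset.range n, (1 + s ^ 2 / ((i : ℝ) + 1) ^ 2) := by
    refine monotone_nat_of_le_succ fun n ↦ ?_
    rw [Finset.prod_range_succ]
    gcongr
    exact le_mul_of_one_le_right (Finset.prod_nonneg fun i _ ↦ by positivity)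
      (le_add_of_nonneg_right (by positivity))
  exact le_of_mul_le_mul_left ((hmono.ge_of_tendsto (tendsto_euler_sinh_prod s) k).trans
    (sinh_le_mul_cosh (by positivity))) (by positivity : 0 < π * s)

lemma norm_add_le_one_add_sq_div_mul {y : ℂ} {σ s c : ℝ} (hσ : 0 ≤ σ) (hc : 0 < c)
    (hre : -c ≤ y.re) (hreσ : y.re ≤ σ) (him : |y.im| ≤ |s|) :
    ‖y + c‖ ≤ (1 + s ^ 2 / c ^ 2) * (σ + c) := by
  have hre_sq : (y.re + c) ^ 2 ≤ (σ + c) ^ 2 := pow_le_pow_left₀ (by linarith) (by linarith) 2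
  have him_sq : y.im ^ 2 ≤ s ^ 2 := sq_le_sq.2 him
  have hs_sq : s ^ 2 ≤ s ^ 2 / c ^ 2 * (σ + c) ^ 2 := by
    rw [div_mul_eq_mul_div, le_div_iff₀ (by positivity)]
    gcongr
    linarith
  have hone : 1 ≤ 1 + s ^ 2 / c ^ 2 := le_add_of_nonneg_right (by positivity)
  refine le_of_sq_le_sq ?_ (by positivity)
  calc ‖y + c‖ ^ 2 = (y.re + c) ^ 2 + y.im ^ 2 := by
        rw [← Complex.normSq_eq_norm_sq, Complex.normSq_apply]
        simp only [Complex.add_re, Complex.add_im, Complex.ofReal_re, Complex.ofReal_im, add_zero]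
        ring
    _ ≤ (1 + s ^ 2 / c ^ 2) * (σ + c) ^ 2 := by linarith
    _ ≤ (1 + s ^ 2 / c ^ 2) ^ 2 * (σ + c) ^ 2 := by
        gcongr
        exact le_self_pow₀ hone two_ne_zero
    _ = ((1 + s ^ 2 / c ^ 2) * (σ + c)) ^ 2 := by ring

lemma norm_risingProd_le {y : ℂ} {σ s : ℝ} (hσ : 0 ≤ σ) (hre : -1 ≤ y.re) (hreσ : y.re ≤ σ)
    (him : |y.im| ≤ |s|) (k : ℕ) : ‖risingProd y k‖ ≤ cosh (π * s) * risingProdR σ k := by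
  refine le_trans ?_ (mul_le_mul_of_nonneg_right (prod_one_add_sq_div_le_cosh s k)
    (risingProdR_pos hσ k).le)
  rw [risingProd, risingProdR, norm_prod, ← Finset.prod_mul_distrib]
  refine Finset.prod_le_prod (fun i _ ↦ norm_nonneg _) fun i _ ↦ ?_
  have : (0 : ℝ) ≤ i := i.cast_nonneg
  have hle := norm_add_le_one_add_sq_div_mul (c := i + 1) hσ (by positivity) (by linarith) hreσ him
  push_cast at hle
  rwa [← add_assoc, ← add_assoc] at hle

lemma norm_risingProd_div_le {y : ℂ} {σ s x : ℝ} (hσ : 0 ≤ σ) (hx : 0 ≤ x) (hre : -1 ≤ y.re)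
    (hreσ : y.re ≤ σ) (him : |y.im| ≤ |s|) (m n : ℕ) :
    ‖risingProd y m / risingProdR x n‖ ≤ cosh (π * s) * (risingProdR σ m / risingProdR x n) := by
  have hpos := risingProdR_pos hx n
  rw [norm_div, Complex.norm_real, norm_of_nonneg hpos.le, ← mul_div_assoc]
  gcongr
  exact norm_risingProd_le hσ hre hreσ him m

variable {σ x : ℝ} (hσ : 0 ≤ σ) (hσx : σ < x)
include hσ hσx

lemma tendsto_risingProdR_div_risingProdR :
    Tendsto (fun n ↦ risingProdR σ n / risingProdR x n) atTop (𝓝 0) := by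
  have hx : 0 < x := hσ.trans_lt hσx
  have hfactor (i : ℕ) :
      (σ + i + 1) / (x + i + 1) ≤ exp (-((x - σ) / (x + 1) * (1 / ((i : ℝ) + 1)))) := by
    refine le_trans ?_ (add_one_le_exp _)
    have hgap : (-((x - σ) / (x + 1) * (1 / ((i : ℝ) + 1))) + 1) * (x + i + 1) - (σ + i + 1) =
        (x - σ) * (x * i) / ((x + 1) * (i + 1)) := by
      field_simp
      ring
    have := sub_pos.2 hσx
    rw [div_le_iff₀ (by positivity), ← sub_nonneg, hgap]
    positivity
  refine squeeze_zero (fun n ↦ div_nonneg (risingProdR_pos hσ n).le (risingProdR_pos hx.le n).le)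
    (fun n ↦ ?_) (tendsto_exp_neg_atTop_nhds_zero.comp
      (tendsto_sum_range_one_div_nat_succ_atTop.const_mul_atTop
        (div_pos (sub_pos.2 hσx) (by linarith : 0 < x + 1))))
  rw [risingProdR, risingProdR, ← Finset.prod_div_distrib, Function.comp_apply, Finset.mul_sum,
    ← Finset.sum_neg_distrib, exp_sum]
  exact Finset.prod_le_prod (fun i _ ↦ by positivity) fun i _ ↦ hfactor i

lemma summable_risingProdR_div_risingProdR_succ :
    Summable fun k ↦ risingProdR σ k / risingProdR x (k + 1) := by
  have hx : 0 < x := hσ.trans_lt hσx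
  have hnonneg (m n : ℕ) : 0 ≤ risingProdR σ m / risingProdR x n :=
    div_nonneg (risingProdR_pos hσ m).le (risingProdR_pos hx.le n).le
  refine summable_of_sum_range_le (c := 1 / (x - σ)) (fun k ↦ hnonneg k (k + 1)) fun n ↦ ?_
  have := sub_pos.2 hσx
  calc ∑ k ∈ Finset.range n, risingProdR σ k / risingProdR x (k + 1)
      = (1 - risingProdR σ n / risingProdR x n) / (x - σ) :=
        sum_prod_div_prod hσx.ne' (fun i ↦ by positivity) n
    _ ≤ 1 / (x - σ) := by
        gcongr
        exact sub_le_self 1 (hnonneg n n)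

lemma hasSum_risingProd_div_risingProdR_succ {y : ℂ} (hre : -1 ≤ y.re) (hreσ : y.re ≤ σ) :
    HasSum (fun k ↦ risingProd y k / risingProdR x (k + 1)) (1 / (x - y)) := by
  have hx : 0 < x := hσ.trans_lt hσx
  have hne : (x : ℂ) ≠ y := fun h ↦ by
    rw [← h, Complex.ofReal_re] at hreσ
    linarith
  have hbound := norm_risingProd_div_le hσ hx.le hre hreσ le_rfl
  have hsummable : Summable fun k ↦ risingProd y k / risingProdR x (k + 1) :=
    Summable.of_norm_bounded ((summable_risingProdR_div_risingProdR_succ hσ hσx).mul_left _)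
      fun k ↦ hbound k (k + 1)
  have hratio : Tendsto (fun n ↦ risingProd y n / risingProdR x n) atTop (𝓝 0) := by
    refine squeeze_zero_norm (fun n ↦ hbound n n) ?_
    simpa only [mul_zero] using (tendsto_risingProdR_div_risingProdR hσ hσx).const_mul _
  have hpartial (n : ℕ) : ∑ k ∈ Finset.range n, risingProd y k / risingProdR x (k + 1) =
      (1 - risingProd y n / risingProdR x n) / (x - y) := by
    simp only [ofReal_risingProdR]
    exact sum_prod_div_prod hne
      (fun i ↦ by exact_mod_cast (by positivity : x + i + 1 ≠ 0)) n
  rw [hsummable.hasSum_iff_tendsto_nat]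
  simpa only [hpartial, sub_zero] using (hratio.const_sub 1).div_const (x - y : ℂ)

end InverseFactorialSeries

section StirlingSeries

/-- The `k`-th term of the convergent Stirling series of order `a`, the index being shifted so that
`k = 0` is the first one. -/
noncomputable def stirlingSeriesTerm (x f : ℝ) (a k : ℕ) : ℝ :=
  (-1) ^ (k + 1) *
      (∑ l ∈ Finset.Icc 1 (k + 1),
        (-1 : ℝ) ^ l / ((l + a) * (l + a + 1)) * (S1 (k + 1) l : ℝ) * bernPoly (l + a + 1) f) /
    risingProdR x (k + 1)

lemma sum_Icc_one_eq_sum_range {M : Type*} [AddCommMonoid M] (g : ℕ → M) (n : ℕ) :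
    ∑ k ∈ Finset.Icc 1 n, g k = ∑ k ∈ Finset.range n, g (k + 1) := by
  rw [Finset.range_eq_Ico, Finset.sum_Ico_add' g 0 n 1, Finset.Ico_add_one_right_eq_Icc, zero_add]

lemma stirlingSeriesTerm_eq_sum_stirling1Unsigned (x f : ℝ) (a k : ℕ) :
    stirlingSeriesTerm x f a k =
      (∑ l ∈ Finset.range (k + 1), stirling1Unsigned (k + 1) (l + 1) *
        (bernPoly (a + l + 2) f / (((a + l : ℕ) + 1) * ((a + l : ℕ) + 2)))) /
        risingProdR x (k + 1) := by
  rw [stirlingSeriesTerm, Finset.mul_sum, sum_Icc_one_eq_sum_range]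
  congr 1
  refine Finset.sum_congr rfl fun l _ ↦ ?_
  have hsign : (-1 : ℝ) ^ (k + 1) * (-1) ^ (l + 1) * (-1) ^ (k + 1 + (l + 1)) = 1 := by
    rw [← pow_add, ← mul_pow, neg_one_mul, neg_neg, one_pow]
  have hindex : l + 1 + a + 1 = a + l + 2 := by ring
  have hden : ((l : ℝ) + 1 + a) * (l + 1 + a + 1) = (a + l + 1) * (a + l + 2) := by ring
  rw [S1, hindex]
  push_cast
  rw [hden]
  linear_combination (stirling1Unsigned (k + 1) (l + 1) : ℝ) *
    (bernPoly (a + l + 2) f / ((a + l + 1) * (a + l + 2))) * hsign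

lemma remainderWeight_mul_risingProd_div (x f : ℝ) (a k : ℕ) (p : ℝ × ℝ) :
    remainderWeight f a p * (risingProd (p.2 * bernoulliVar f p.1) k / risingProdR x (k + 1)) =
      (∑ l ∈ Finset.range (k + 1),
        stirling1Unsigned (k + 1) (l + 1) * remainderWeight f (a + l) p) /
        risingProdR x (k + 1) := by
  rw [risingProd_eq_sum, ← mul_div_assoc, Finset.mul_sum]
  congr 1
  refine Finset.sum_congr rfl fun l _ ↦ ?_
  rw [remainderWeight_add]
  ring

lemma integrable_remainderWeight_mul_risingProd_div (x f : ℝ) (a k : ℕ) :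
    Integrable (fun p ↦ remainderWeight f a p *
      (risingProd (p.2 * bernoulliVar f p.1) k / risingProdR x (k + 1)))
      logisticUniformMeasure := by
  simp only [remainderWeight_mul_risingProd_div]
  exact (integrable_finsetSum _ fun l _ ↦
    (integrable_remainderWeight f (a + l)).const_mul _).div_const _

lemma integral_remainderWeight_mul_risingProd_div (x f : ℝ) (a k : ℕ) :
    ∫ p, remainderWeight f a p *
      (risingProd (p.2 * bernoulliVar f p.1) k / risingProdR x (k + 1)) ∂logisticUniformMeasure =
      stirlingSeriesTerm x f a k := by
  simp only [remainderWeight_mul_risingProd_div]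
  rw [integral_div, integral_finsetSum _ fun l _ ↦
    (integrable_remainderWeight f (a + l)).const_mul _]
  simp only [integral_const_mul, integral_remainderWeight,
    stirlingSeriesTerm_eq_sum_stirling1Unsigned]
  push_cast
  rfl

lemma norm_remainderWeight_le (f : ℝ) (a : ℕ) {p : ℝ × ℝ} (hp : p.2 ∈ Set.Ioc (0 : ℝ) 1) :
    ‖remainderWeight f a p‖ ≤ (|f| + 1) ^ (a + 2) * (1 + |p.1|) ^ (a + 2) := by
  have hone_sub : 0 ≤ 1 - p.2 := sub_nonneg.2 hp.2
  have hbeta : ‖(p.2 : ℂ) ^ a * (1 - p.2)‖ ≤ 1 := by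
    rw [← Complex.ofReal_one, ← Complex.ofReal_sub, norm_mul, norm_pow, Complex.norm_real,
      Complex.norm_real, norm_of_nonneg hp.1.le, norm_of_nonneg hone_sub]
    exact mul_le_one₀ (pow_le_one₀ hp.1.le hp.2) hone_sub (sub_le_self 1 hp.1.le)
  rw [remainderWeight, norm_mul, norm_pow]
  exact (mul_le_of_le_one_right (by positivity) hbeta).trans (norm_bernoulliVar_pow_le f p.1 _)

lemma integrable_norm_remainderWeight_mul_cosh (f : ℝ) (a : ℕ) :
    Integrable (fun p ↦ ‖remainderWeight f a p‖ * cosh (π * p.1)) logisticUniformMeasure := by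
  have hmajorant : Integrable (fun p : ℝ × ℝ ↦
      (|f| + 1) ^ (a + 2) * ((1 + |p.1|) ^ (a + 2) * cosh (π * p.1))) logisticUniformMeasure :=
    ((integrable_one_add_abs_pow_mul_cosh (a + 2)).comp_fst _).const_mul _
  refine hmajorant.mono' (Continuous.aestronglyMeasurable (by fun_prop)) ?_
  filter_upwards [ae_snd_mem_Ioc] with p hp
  have := cosh_pos (π * p.1)
  rw [norm_of_nonneg (by positivity), ← mul_assoc]
  gcongr
  exact norm_remainderWeight_le f a hp

lemma neg_one_le_re_ofReal_mul {t : ℝ} (ht0 : 0 ≤ t) (ht1 : t ≤ 1) {z : ℂ} (hz : -1 ≤ z.re) :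
    -1 ≤ (t * z).re := by
  rw [Complex.re_ofReal_mul]
  nlinarith

lemma abs_im_ofReal_mul_le {t : ℝ} (ht0 : 0 ≤ t) (ht1 : t ≤ 1) (z : ℂ) :
    |(t * z).im| ≤ |z.im| := by
  rw [Complex.im_ofReal_mul, abs_mul, abs_of_nonneg ht0]
  exact mul_le_of_le_one_left (abs_nonneg _) ht1

variable {x f : ℝ} (hf : -1 / 2 ≤ f) (hx : max 0 (f - 1 / 2) < x) (a : ℕ)
include hf hx

lemma norm_remainderWeight_mul_risingProd_div_le (k : ℕ) {p : ℝ × ℝ}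
    (hp : p.2 ∈ Set.Ioc (0 : ℝ) 1) :
    ‖remainderWeight f a p *
      (risingProd (p.2 * bernoulliVar f p.1) k / risingProdR x (k + 1))‖ ≤
      ‖remainderWeight f a p‖ * cosh (π * p.1) *
        (risingProdR (max 0 (f - 1 / 2)) k / risingProdR x (k + 1)) := by
  have hre := neg_one_le_re_ofReal_mul hp.1.le hp.2 (z := bernoulliVar f p.1)
    (by rw [bernoulliVar_re]; linarith)
  have hre_le := re_ofReal_mul_le_max hp.1.le hp.2 (bernoulliVar f p.1)
  have him := abs_im_ofReal_mul_le hp.1.le hp.2 (bernoulliVar f p.1)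
  rw [bernoulliVar_re] at hre_le
  rw [bernoulliVar_im, abs_neg] at him
  rw [norm_mul, mul_assoc]
  gcongr
  exact norm_risingProd_div_le (le_max_left _ _) ((le_max_left _ _).trans hx.le) hre hre_le him k _

lemma summable_integral_norm_remainderWeight_mul_risingProd_div :
    Summable fun k ↦ ∫ p, ‖remainderWeight f a p *
      (risingProd (p.2 * bernoulliVar f p.1) k / risingProdR x (k + 1))‖
        ∂logisticUniformMeasure := by
  refine Summable.of_nonneg_of_le (fun k ↦ integral_nonneg fun p ↦ norm_nonneg _) (fun k ↦ ?_)
    ((summable_risingProdR_div_risingProdR_succ (le_max_left _ _) hx).mul_left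
      (∫ p, ‖remainderWeight f a p‖ * cosh (π * p.1) ∂logisticUniformMeasure))
  rw [← integral_mul_const]
  exact integral_mono_ae (integrable_remainderWeight_mul_risingProd_div x f a k).norm
    ((integrable_norm_remainderWeight_mul_cosh f a).mul_const _)
    (ae_snd_mem_Ioc.mono fun p ↦ norm_remainderWeight_mul_risingProd_div_le hf hx a k)

lemma summable_abs_stirlingSeriesTerm : Summable fun k ↦ |stirlingSeriesTerm x f a k| := by
  refine Summable.of_nonneg_of_le (fun k ↦ abs_nonneg _) (fun k ↦ ?_)
    (summable_integral_norm_remainderWeight_mul_risingProd_div hf hx a)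
  rw [← norm_eq_abs, ← Complex.norm_real, ← integral_remainderWeight_mul_risingProd_div]
  exact norm_integral_le_integral_norm _

lemma stirlingRemainder_eq_tsum :
    stirlingRemainder x f a = (∑' k, stirlingSeriesTerm x f a k : ℝ) := by
  have hsum := hasSum_integral_of_summable_integral_norm
    (integrable_remainderWeight_mul_risingProd_div x f a)
    (summable_integral_norm_remainderWeight_mul_risingProd_div hf hx a)
  simp only [integral_remainderWeight_mul_risingProd_div] at hsum
  rw [Complex.ofReal_tsum, hsum.tsum_eq, stirlingRemainder]
  refine integral_congr_ae ?_
  filter_upwards [ae_snd_mem_Ioc] with p hp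
  have hre := neg_one_le_re_ofReal_mul hp.1.le hp.2 (z := bernoulliVar f p.1)
    (by rw [bernoulliVar_re]; linarith)
  have hre_le := re_ofReal_mul_le_max hp.1.le hp.2 (bernoulliVar f p.1)
  rw [bernoulliVar_re] at hre_le
  rw [((hasSum_risingProd_div_risingProdR_succ (le_max_left _ _) hx hre hre_le).mul_left _).tsum_eq,
    mul_one_div]

end StirlingSeries

theorem stirling_log_factorial_formula_general {x : ℝ} (hx : 0 < x) {n : ℕ} (hn : n ≤ x + 1 / 2)
    (a : ℕ) :
    Summable (fun k ↦ |stirlingSeriesTerm x (x - n) a k|) ∧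
      ∑ k ∈ Finset.Icc 1 n, log k =
        x * log x - x + 1 / 2 * log (2 * π) - bernPoly 1 (x - n) * log x +
          ∑ k ∈ Finset.Icc 1 a, bernPoly (k + 1) (x - n) / (k * (k + 1) * x ^ k) +
          1 / x ^ a * ∑' k, stirlingSeriesTerm x (x - n) a k := by
  have hf : -1 / 2 ≤ x - n := by linarith
  have hmax : max 0 (x - n - 1 / 2) < x := max_lt hx (by linarith [n.cast_nonneg (α := ℝ)])
  refine ⟨summable_abs_stirlingSeriesTerm hf hmax a, ?_⟩
  have hexpansion := stirlingRemainder_zero_eq_sum_add a hmax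
  rw [stirlingRemainder_zero hmax, sub_sub_cancel, logFactorialMean_natCast, log_factorial_eq_sum,
    logPrimitive, ← Complex.ofReal_log hx.le, stirlingRemainder_eq_tsum hf hmax] at hexpansion
  norm_cast at hexpansion
  push_cast at hexpansion
  linear_combination hexpansion

open Finset Real in
/-- Generalized convergent Stirling summation formula for the log-factorial sum
(formula (57) from the Conclusion of the paper). -/
theorem stirling_log_factorial_formula (x : ℝ) (hx : 0 < x) (a : ℕ) :
    Summable (fun k : ℕ =>
      |(-1 : ℝ) ^ (k + 1) *
          (∑ l ∈ Icc 1 (k + 1),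
            (-1 : ℝ) ^ l / ((l + a) * (l + a + 1)) * (S1 (k + 1) l : ℝ) *
              bernPoly (l + a + 1) (Int.fract x)) /
        risingProdR x (k + 1)|) ∧
    (∑ k ∈ Icc 1 ⌊x⌋₊, Real.log k) =
      x * Real.log x - x + 1 / 2 * Real.log (2 * π) -
        bernPoly 1 (Int.fract x) * Real.log x +
        (∑ k ∈ Icc 1 a, bernPoly (k + 1) (Int.fract x) / (k * (k + 1) * x ^ k)) +
        1 / x ^ a *
          ∑' k : ℕ,
            (-1 : ℝ) ^ (k + 1) *
                (∑ l ∈ Icc 1 (k + 1),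
                  (-1 : ℝ) ^ l / ((l + a) * (l + a + 1)) * (S1 (k + 1) l : ℝ) *
                    bernPoly (l + a + 1) (Int.fract x)) /
              risingProdR x (k + 1) := by
  have hfract : x - ⌊x⌋₊ = Int.fract x := by
    rw [natCast_floor_eq_intCast_floor hx.le, Int.self_sub_floor]
  rw [← hfract]
  exact stirling_log_factorial_formula_general hx (by linarith [Nat.floor_le hx.le]) a
end
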